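/- There exist constants C, c, C₃ > 0 such that the following holds. If the partition is balanced, k ≥ 2, and n ≥ C·k²·p·(log n)¹²/(p−q)², then with probability at least 1 − c/n over the choice of E, for every vertex u ∈ V, ‖P_{Ĝ_k}·E_u‖ ≤ C₃·(√(kp)·(log n)² + √(log n)). -/

import Mathlib

open MeasureTheory ProbabilityTheory Matrix Finset

namespace SBM

/-- Euclidean norm of a vector. -/
noncomputable def enorm {m : Type*} [Fintype m] (x : m → ℝ) : ℝ :=
  Real.sqrt (∑ i, x i ^ 2)

/-- Spectral (ℓ²-operator) norm of a matrix. -/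
noncomputable def specNorm {n : ℕ} (A : Matrix (Fin n) (Fin n) ℝ) : ℝ :=
  ‖Matrix.toEuclideanCLM (𝕜 := ℝ) A‖

/-- The `2 → ∞` norm: maximal Euclidean norm of a row. -/
noncomputable def n2i {n : ℕ} (A : Matrix (Fin n) (Fin n) ℝ) : ℝ :=
  ⨆ i : Fin n, enorm (A i)

/-- The mean matrix `G` of the SSBM with cluster assignment `cl`. -/
def meanMatrix (n k : ℕ) (p q : ℝ) (cl : Fin n → Fin k) : Matrix (Fin n) (Fin n) ℝ :=
  Matrix.of fun u v => if cl u = cl v then p else q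

/-- The size of cluster `i`. -/
def clusterSize {n k : ℕ} (cl : Fin n → Fin k) (i : Fin k) : ℕ :=
  (Finset.univ.filter fun v => cl v = i).card

/-- The partition is balanced: every cluster size is within a `1 ± 1/(16 log n)` factor
of `n / k`. -/
noncomputable def Balanced (n k : ℕ) (cl : Fin n → Fin k) : Prop :=
  ∀ i : Fin k,
    (1 - 1 / (16 * Real.log n)) * ((n : ℝ) / k) ≤ (clusterSize cl i : ℝ) ∧
    (clusterSize cl i : ℝ) ≤ (1 + 1 / (16 * Real.log n)) * ((n : ℝ) / k)

/-- `lam, v` is a spectral decomposition of `A`: eigenvalues in non-increasing order with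
an orthonormal eigenbasis. -/
def IsSpectralDecomp {n : ℕ} (A : Matrix (Fin n) (Fin n) ℝ)
    (lam : Fin n → ℝ) (v : Fin n → Fin n → ℝ) : Prop :=
  Antitone lam ∧
  (∀ i j, dotProduct (v i) (v j) = if i = j then (1 : ℝ) else 0) ∧
  A = ∑ i, lam i • Matrix.vecMulVec (v i) (v i)

/-- Orthogonal projection onto the span of the top `k` eigenvectors `v 0, …, v (k-1)`. -/
noncomputable def projTop {n : ℕ} (k : ℕ) (v : Fin n → Fin n → ℝ) :
    Matrix (Fin n) (Fin n) ℝ :=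
  ∑ i ∈ Finset.univ.filter (fun i : Fin n => (i : ℕ) < k), Matrix.vecMulVec (v i) (v i)

/-- The column of `A` indexed by `u`. -/
def column {n : ℕ} (A : Matrix (Fin n) (Fin n) ℝ) (u : Fin n) : Fin n → ℝ :=
  fun i => A i u

/-- `ψ(M) = A·M² + B·M` where `A = -1/(λ₁μ)`, `B = 1/λ₁ + 1/μ`. -/
noncomputable def psiM {n : ℕ} (lam1 mu : ℝ) (M : Matrix (Fin n) (Fin n) ℝ) :
    Matrix (Fin n) (Fin n) ℝ :=
  (-(1 / (lam1 * mu))) • (M * M) + (1 / lam1 + 1 / mu) • M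

/-- `φ(M) = ψ(M)^r`. -/
noncomputable def phiM {n : ℕ} (lam1 mu : ℝ) (r : ℕ) (M : Matrix (Fin n) (Fin n) ℝ) :
    Matrix (Fin n) (Fin n) ℝ :=
  psiM lam1 mu M ^ r

/-- `ψ(t) = A·t² + B·t` where `A = -1/(λ₁μ)`, `B = 1/λ₁ + 1/μ`. -/
noncomputable def psiR (lam1 mu t : ℝ) : ℝ :=
  (-(1 / (lam1 * mu))) * t ^ 2 + (1 / lam1 + 1 / mu) * t

/-- `φ(t) = ψ(t)^r`. -/
noncomputable def phiR (lam1 mu : ℝ) (r : ℕ) (t : ℝ) : ℝ := psiR lam1 mu t ^ r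

end SBM

namespace SBM

/-- The SSBM noise model: `E` is a random symmetric matrix whose upper-triangular entries
are independent, with `E_{uv} = 1 − G_{uv}` with probability `G_{uv}` and
`E_{uv} = −G_{uv}` with probability `1 − G_{uv}`, where `G` is the mean matrix. -/
def NoiseModel {Ω : Type*} [MeasureSpace Ω] {n k : ℕ} (p q : ℝ) (cl : Fin n → Fin k)
    (E : Ω → Matrix (Fin n) (Fin n) ℝ) : Prop :=
  (∀ ω, (E ω).IsSymm) ∧
  (∀ u v : Fin n, Measurable fun ω => E ω u v) ∧
  iIndepFun (m := fun _ : {e : Fin n × Fin n // e.1 ≤ e.2} => (inferInstance : MeasurableSpace ℝ))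
    (fun e ω => E ω e.1.1 e.1.2) ℙ ∧
  (∀ u v : Fin n, u ≤ v →
    Measure.map (fun ω => E ω u v) ℙ =
      ENNReal.ofReal (meanMatrix n k p q cl u v) •
        Measure.dirac (1 - meanMatrix n k p q cl u v) +
      ENNReal.ofReal (1 - meanMatrix n k p q cl u v) •
        Measure.dirac (-(meanMatrix n k p q cl u v)))

end SBM

/-!
A top-`k` eigenvector projection of `Ĝ = G + E` depends on the column `E_u`, so it is compared with
the large spectral projection of the leave-one-out matrix obtained from `Ĝ` by deleting the noise
in the row and column of `u`, which is independent of `E_u`. Conditionally on that matrix, the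
projected column is a sum of independent centered vectors `E_{uv} P e_v`, where `∑_v ‖P e_v‖²` is
of order `k` and each `‖P e_v‖` is small, so a vector Bernstein inequality applies; the two
projections differ by a Davis–Kahan argument. Both steps need `‖E‖` to be small compared with the
`k`-th eigenvalue of `G`, and `‖E‖` is controlled by bounding the moments `𝔼 tr E^{2r}` recursively
in `r`.
-/

namespace SBM

section Bernoulli

/-- The probability that a Bernoulli variable of parameter `g` takes the value `b`. -/
def bernoulliWeight (g : unitInterval) (b : Bool) : ℝ :=
  if b then g else 1 - g

/-- A Bernoulli variable of parameter `g` minus its mean, as a function of its value `b`. -/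
def centered (g : unitInterval) (b : Bool) : ℝ :=
  if b then 1 - g else -g

lemma bernoulliWeight_nonneg (g : unitInterval) (b : Bool) : 0 ≤ bernoulliWeight g b := by
  cases b <;> simp [bernoulliWeight, g.2.1, g.2.2]

lemma abs_centered_le_one (g : unitInterval) (b : Bool) : |centered g b| ≤ 1 := by
  obtain ⟨h0, h1⟩ := g.2
  rw [abs_le]
  cases b <;> simp only [centered, Bool.false_eq_true, if_false, if_true] <;>
    constructor <;> linarith

variable {ι : Type*} {g : ι → unitInterval}

/-- The average of `f` over the `i`-th variable alone, the others being held at `x`. -/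
def average [DecidableEq ι] (g : ι → unitInterval) (i : ι) (f : (ι → Bool) → ℝ)
    (x : ι → Bool) : ℝ :=
  g i * f (Function.update x i true) + (1 - g i) * f (Function.update x i false)

lemma average_eq_sum [DecidableEq ι] (i : ι) (f : (ι → Bool) → ℝ) (x : ι → Bool) :
    average g i f x = ∑ b, bernoulliWeight (g i) b * f (Function.update x i b) := by
  simp [average, bernoulliWeight]

variable [Fintype ι]

/-- The probability of the outcome `x` of independent Bernoulli variables with parameters `g`. -/
def productWeight (g : ι → unitInterval) (x : ι → Bool) : ℝ :=
  ∏ i, bernoulliWeight (g i) (x i)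

lemma productWeight_nonneg (g : ι → unitInterval) (x : ι → Bool) : 0 ≤ productWeight g x :=
  prod_nonneg fun i _ => bernoulliWeight_nonneg (g i) (x i)

variable [DecidableEq ι]

lemma sum_productWeight (g : ι → unitInterval) : ∑ x, productWeight g x = 1 := by
  simp_rw [productWeight]
  rw [← Fintype.prod_sum fun i => bernoulliWeight (g i)]
  simp [bernoulliWeight]

/-- The expectation of `f` under independent Bernoulli variables with parameters `g`. -/
def expect (g : ι → unitInterval) (f : (ι → Bool) → ℝ) : ℝ :=
  ∑ x, productWeight g x * f x

lemma expect_mono {f h : (ι → Bool) → ℝ} (hfh : ∀ x, f x ≤ h x) : expect g f ≤ expect g h :=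
  sum_le_sum fun x _ => mul_le_mul_of_nonneg_left (hfh x) (productWeight_nonneg g x)

lemma expect_const (c : ℝ) : expect g (fun _ => c) = c := by
  rw [expect, ← sum_mul, sum_productWeight, one_mul]

lemma expect_add (f h : (ι → Bool) → ℝ) :
    expect g (fun x => f x + h x) = expect g f + expect g h := by
  simp [expect, mul_add, sum_add_distrib]

lemma expect_const_mul (c : ℝ) (f : (ι → Bool) → ℝ) :
    expect g (fun x => c * f x) = c * expect g f := by
  simp only [expect, mul_sum, mul_left_comm]

lemma expect_sum {κ : Type*} (s : Finset κ) (f : κ → (ι → Bool) → ℝ) :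
    expect g (fun x => ∑ a ∈ s, f a x) = ∑ a ∈ s, expect g (f a) := by
  simp only [expect, mul_sum]
  exact sum_comm

lemma productWeight_update_mul (i : ι) (x : ι → Bool) (b : Bool) :
    productWeight g (Function.update x i b) * bernoulliWeight (g i) (x i) =
      productWeight g x * bernoulliWeight (g i) b := by
  have hrest : ∏ j ∈ univ.erase i, bernoulliWeight (g j) (Function.update x i b j) =
      ∏ j ∈ univ.erase i, bernoulliWeight (g j) (x j) :=
    prod_congr rfl fun j hj => by rw [Function.update_of_ne (ne_of_mem_erase hj)]
  rw [productWeight, productWeight, ← mul_prod_erase _ _ (mem_univ i), hrest,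
    ← mul_prod_erase univ (fun j => bernoulliWeight (g j) (x j)) (mem_univ i),
    Function.update_self]
  ring

-- Exchanging the `i`-th coordinate of `x` with an independent copy `b` preserves the joint weight.
lemma expect_average (i : ι) (f : (ι → Bool) → ℝ) : expect g (average g i f) = expect g f := by
  have hswap : Function.Involutive
      fun y : (ι → Bool) × Bool => (Function.update y.1 i y.2, y.1 i) := by
    intro y
    simp
  have hone : ∑ b, bernoulliWeight (g i) b = 1 := by simp [bernoulliWeight]
  calc expect g (average g i f)
      = ∑ y : (ι → Bool) × Bool,
          productWeight g y.1 * bernoulliWeight (g i) y.2 * f (Function.update y.1 i y.2) := by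
        simp only [expect, average_eq_sum, mul_sum, Fintype.sum_prod_type, mul_assoc]
    _ = ∑ y : (ι → Bool) × Bool, productWeight g y.1 * bernoulliWeight (g i) y.2 * f y.1 := by
        refine Fintype.sum_equiv hswap.toPerm _ _ fun y => ?_
        rw [Function.Involutive.coe_toPerm, productWeight_update_mul]
    _ = expect g f := by
        rw [Fintype.sum_prod_type]
        refine sum_congr rfl fun x _ => ?_
        dsimp only
        rw [← sum_mul, ← mul_sum, hone, mul_one]

lemma expect_centered_mul (i : ι) (f : (ι → Bool) → ℝ) :
    expect g (fun x => centered (g i) (x i) * f x) = g i * (1 - g i) *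
      expect g (fun x => f (Function.update x i true) - f (Function.update x i false)) := by
  rw [← expect_average i, ← expect_const_mul]
  congr! 2 with x
  simp only [average, centered, Function.update_self, if_true, Bool.false_eq_true, if_false]
  ring

lemma expect_abs_centered_mul (i : ι) (f : (ι → Bool) → ℝ) :
    expect g (fun x => |centered (g i) (x i)| * f x) = g i * (1 - g i) *
      expect g (fun x => f (Function.update x i true) + f (Function.update x i false)) := by
  rw [← expect_average i, ← expect_const_mul]
  congr! 2 with x
  obtain ⟨h0, h1⟩ := (g i).2
  simp only [average, centered, Function.update_self, if_true, Bool.false_eq_true, if_false,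
    abs_neg, abs_of_nonneg h0, abs_of_nonneg (sub_nonneg.2 h1)]
  ring

/-- The probability of the event `A` under independent Bernoulli variables with parameters `g`. -/
noncomputable def prob (g : ι → unitInterval) (A : Set (ι → Bool)) : ℝ :=
  expect g (A.indicator 1)

lemma prob_mono {A B : Set (ι → Bool)} (h : A ⊆ B) : prob g A ≤ prob g B :=
  expect_mono fun x => Set.indicator_le_indicator_of_subset h (fun _ => zero_le_one) x

lemma prob_add_prob_compl (A : Set (ι → Bool)) : prob g A + prob g Aᶜ = 1 := by
  rw [prob, prob, ← expect_add, ← expect_const (g := g) 1]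
  exact congrArg _ (Set.indicator_self_add_compl (M := ℝ) A 1)

lemma prob_union_le (A B : Set (ι → Bool)) : prob g (A ∪ B) ≤ prob g A + prob g B := by
  rw [prob, prob, prob, ← expect_add]
  refine expect_mono fun x => ?_
  by_cases hA : x ∈ A <;> by_cases hB : x ∈ B <;> simp [hA, hB]

lemma prob_iUnion_le {κ : Type*} [Fintype κ] (A : κ → Set (ι → Bool)) :
    prob g (⋃ a, A a) ≤ ∑ a, prob g (A a) := by
  simp only [prob]
  rw [← expect_sum]
  refine expect_mono fun x => ?_
  have hnonneg : ∀ a ∈ univ, 0 ≤ (A a).indicator (1 : (ι → Bool) → ℝ) x := fun a _ =>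
    Set.indicator_nonneg (fun _ _ => zero_le_one) x
  by_cases hx : x ∈ ⋃ a, A a
  · obtain ⟨a, ha⟩ := Set.mem_iUnion.1 hx
    simpa [hx, ha] using single_le_sum hnonneg (mem_univ a)
  · simpa only [Set.indicator_of_notMem hx] using sum_nonneg hnonneg

lemma mul_prob_le_expect {f : (ι → Bool) → ℝ} (hf : ∀ x, 0 ≤ f x) (t : ℝ) :
    t * prob g {x | t ≤ f x} ≤ expect g f := by
  rw [prob, ← expect_const_mul]
  refine expect_mono fun x => ?_
  by_cases hx : t ≤ f x <;> simp [hx, hf x]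

lemma prob_lt_le_exp_neg_mul (f : (ι → Bool) → ℝ) (t : ℝ) :
    prob g {x | t < f x} ≤ Real.exp (-t) * expect g fun x => Real.exp (f x) := by
  have hmarkov := mul_prob_le_expect (g := g) (fun x => (Real.exp_pos (f x)).le) (Real.exp t)
  have hsub : {x | t < f x} ⊆ {x | Real.exp t ≤ Real.exp (f x)} := fun x hx =>
    Real.exp_le_exp.2 (le_of_lt hx)
  rw [Real.exp_neg, inv_mul_eq_div, le_div_iff₀' (Real.exp_pos t)]
  exact (mul_le_mul_of_nonneg_left (prob_mono hsub) (Real.exp_pos t).le).trans hmarkov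

end Bernoulli

section VectorBernstein

variable {H : Type*} [NormedAddCommGroup H]

/-- The smooth majorant `√(1 + ‖x‖²)` of the norm, the potential function in the proof of the
vector Bernstein inequality. -/
noncomputable def smoothNorm (x : H) : ℝ :=
  √(1 + ‖x‖ ^ 2)

lemma norm_le_smoothNorm (x : H) : ‖x‖ ≤ smoothNorm x :=
  Real.le_sqrt_of_sq_le (by linarith)

lemma one_le_smoothNorm (x : H) : 1 ≤ smoothNorm x :=
  Real.one_le_sqrt.2 (by linarith [sq_nonneg ‖x‖])

lemma smoothNorm_zero : smoothNorm (0 : H) = 1 := by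
  simp [smoothNorm]

variable [InnerProductSpace ℝ H]

lemma abs_inner_div_smoothNorm_le (x y : H) : |inner ℝ x y / smoothNorm x| ≤ ‖y‖ := by
  have hs : 0 < smoothNorm x := zero_lt_one.trans_le (one_le_smoothNorm x)
  rw [abs_div, abs_of_pos hs, div_le_iff₀ hs, mul_comm]
  exact (abs_real_inner_le_norm x y).trans
    (mul_le_mul_of_nonneg_right (norm_le_smoothNorm x) (norm_nonneg y))

lemma smoothNorm_add_le (x y : H) :
    smoothNorm (x + y) ≤ smoothNorm x + inner ℝ x y / smoothNorm x + ‖y‖ ^ 2 / 2 := by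
  set s := smoothNorm x
  have hs : 1 ≤ s := one_le_smoothNorm x
  have hsq : s ^ 2 = 1 + ‖x‖ ^ 2 := Real.sq_sqrt (by positivity)
  have hmul : s * (inner ℝ x y / s) = inner ℝ x y := mul_div_cancel₀ _ (by positivity)
  have hcs : |inner ℝ x y / s| ≤ ‖y‖ := abs_inner_div_smoothNorm_le x y
  set r := inner ℝ x y / s
  have hr : -‖y‖ ≤ r := (abs_le.1 hcs).1
  refine Real.sqrt_le_iff.2 ⟨by nlinarith [sq_nonneg (‖y‖ - 1)], ?_⟩
  rw [norm_add_sq_real]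
  have hgain : ‖y‖ ^ 2 ≤ s * ‖y‖ ^ 2 := le_mul_of_one_le_left (sq_nonneg _) hs
  nlinarith [sq_nonneg (r + ‖y‖ ^ 2 / 2)]

lemma exp_smoothNorm_add_smul_le {x y : H} (hy : ‖y‖ ≤ 1 / 2) {c : ℝ} (hc : |c| ≤ 1) :
    Real.exp (smoothNorm (x + c • y)) ≤ Real.exp (smoothNorm x) *
      (1 + c * (inner ℝ x y / smoothNorm x) + 3 * c ^ 2 * ‖y‖ ^ 2) := by
  set r := inner ℝ x y / smoothNorm x
  set z := c * r + c ^ 2 * ‖y‖ ^ 2 / 2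
  have hcr : |c * r| ≤ |c| * ‖y‖ := by
    rw [abs_mul]
    exact mul_le_mul_of_nonneg_left (abs_inner_div_smoothNorm_le x y) (abs_nonneg c)
  have hcy : |c| * ‖y‖ ≤ 1 / 2 := (mul_le_of_le_one_left (norm_nonneg y) hc).trans hy
  have hsq : c ^ 2 * ‖y‖ ^ 2 = (|c| * ‖y‖) ^ 2 := by rw [mul_pow, sq_abs]
  have hz : |z| ≤ 5 / 4 * (|c| * ‖y‖) := by
    refine (abs_add_le _ _).trans ?_
    rw [hsq, abs_of_nonneg (by positivity : 0 ≤ (|c| * ‖y‖) ^ 2 / 2)]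
    nlinarith [mul_nonneg (abs_nonneg c) (norm_nonneg y)]
  have hexp : Real.exp z ≤ 1 + z + z ^ 2 := by
    have := (abs_le.1 (Real.abs_exp_sub_one_sub_id_le (x := z) (by linarith))).2
    linarith
  have hz2 : z ^ 2 ≤ 25 / 16 * (c ^ 2 * ‖y‖ ^ 2) := by
    rw [hsq, ← sq_abs z]
    nlinarith [abs_nonneg z]
  have hstep : smoothNorm (x + c • y) ≤ smoothNorm x + z := by
    refine (smoothNorm_add_le x (c • y)).trans_eq ?_
    rw [real_inner_smul_right, norm_smul, Real.norm_eq_abs, ← hsq, add_assoc, mul_div_assoc]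
  calc Real.exp (smoothNorm (x + c • y)) ≤ Real.exp (smoothNorm x) * Real.exp z := by
        rw [← Real.exp_add]
        exact Real.exp_le_exp.2 hstep
    _ ≤ _ := by
        refine mul_le_mul_of_nonneg_left (hexp.trans ?_) (Real.exp_pos _).le
        have hnonneg : 0 ≤ c ^ 2 * ‖y‖ ^ 2 := by positivity
        have hz_eq : z = c * r + c ^ 2 * ‖y‖ ^ 2 / 2 := rfl
        linarith

lemma bernoulli_exp_smoothNorm_le (g : unitInterval) (x : H) {y : H} (hy : ‖y‖ ≤ 1 / 2) :
    g * Real.exp (smoothNorm (x + centered g true • y)) +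
        (1 - g) * Real.exp (smoothNorm (x + centered g false • y)) ≤
      Real.exp (smoothNorm x + 3 * g * ‖y‖ ^ 2) := by
  obtain ⟨h0, h1⟩ := g.2
  have h1' : (0 : ℝ) ≤ 1 - g := by linarith
  have htrue := exp_smoothNorm_add_smul_le (x := x) hy (abs_centered_le_one g true)
  have hfalse := exp_smoothNorm_add_smul_le (x := x) hy (abs_centered_le_one g false)
  simp only [centered, if_true, Bool.false_eq_true, if_false] at htrue hfalse ⊢
  have hexp : 1 + 3 * g * ‖y‖ ^ 2 ≤ Real.exp (3 * g * ‖y‖ ^ 2) := by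
    linarith [Real.add_one_le_exp (3 * g * ‖y‖ ^ 2)]
  have hvar : 3 * (g * (1 - g)) * ‖y‖ ^ 2 ≤ 3 * g * ‖y‖ ^ 2 := by
    nlinarith [mul_nonneg (mul_nonneg h0 h0) (sq_nonneg ‖y‖)]
  calc _ ≤ g * (Real.exp (smoothNorm x) *
            (1 + (1 - g) * (inner ℝ x y / smoothNorm x) + 3 * (1 - g) ^ 2 * ‖y‖ ^ 2)) +
          (1 - g) * (Real.exp (smoothNorm x) *
            (1 + -g * (inner ℝ x y / smoothNorm x) + 3 * (-g) ^ 2 * ‖y‖ ^ 2)) :=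
        add_le_add (mul_le_mul_of_nonneg_left htrue h0) (mul_le_mul_of_nonneg_left hfalse h1')
    _ = Real.exp (smoothNorm x) * (1 + 3 * (g * (1 - g)) * ‖y‖ ^ 2) := by ring
    _ ≤ Real.exp (smoothNorm x) * Real.exp (3 * g * ‖y‖ ^ 2) :=
        mul_le_mul_of_nonneg_left (by linarith) (Real.exp_pos _).le
    _ = _ := (Real.exp_add _ _).symm

variable {ι κ : Type*} [Fintype ι] [DecidableEq ι] {g : ι → unitInterval} {e : κ → ι}
  {y : κ → (ι → Bool) → H}

lemma expect_exp_smoothNorm_sub_le (he : e.Injective)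
    (hy : ∀ a b x t, y a (Function.update x (e b) t) = y a x)
    (hbound : ∀ a x, ‖y a x‖ ≤ 1 / 2) (s : Finset κ) :
    expect g (fun x => Real.exp (smoothNorm (∑ a ∈ s, centered (g (e a)) (x (e a)) • y a x) -
      3 * ∑ a ∈ s, g (e a) * ‖y a x‖ ^ 2)) ≤ Real.exp 1 := by
  classical
  induction s using Finset.induction_on with
  | empty => simp [expect_const, smoothNorm_zero]
  | insert b s hb ih =>
    rw [← expect_average (e b)]
    refine (expect_mono fun x => ?_).trans ih
    have hne : ∀ a ∈ s, e a ≠ e b := fun a ha h => hb (he h ▸ ha)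
    have hrest : ∀ t, ∑ a ∈ s, centered (g (e a)) (Function.update x (e b) t (e a)) • y a x =
        ∑ a ∈ s, centered (g (e a)) (x (e a)) • y a x := fun t =>
      sum_congr rfl fun a ha => by rw [Function.update_of_ne (hne a ha)]
    simp only [average, sum_insert hb, hy, Function.update_self, hrest, Real.exp_sub]
    rw [← mul_div_assoc, ← mul_div_assoc, ← add_div,
      div_le_div_iff₀ (Real.exp_pos _) (Real.exp_pos _), mul_add, Real.exp_add, ← mul_assoc]
    refine mul_le_mul_of_nonneg_right ?_ (Real.exp_pos _).le
    have hstep := bernoulli_exp_smoothNorm_le (g (e b))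
      (∑ a ∈ s, centered (g (e a)) (x (e a)) • y a x) (hbound b x)
    rw [Real.exp_add, mul_assoc 3] at hstep
    simpa only [add_comm] using hstep

variable [Fintype κ]

theorem expect_exp_norm_sum_le (he : e.Injective)
    (hy : ∀ a b x t, y a (Function.update x (e b) t) = y a x)
    (hbound : ∀ a x, ‖y a x‖ ≤ 1 / 2) {K : ℝ}
    (hvar : ∀ x, ∑ a, g (e a) * ‖y a x‖ ^ 2 ≤ K) :
    expect g (fun x => Real.exp ‖∑ a, centered (g (e a)) (x (e a)) • y a x‖) ≤
      Real.exp (1 + 3 * K) := by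
  rw [Real.exp_add, mul_comm, ← div_le_iff₀' (Real.exp_pos _), div_eq_inv_mul, ← expect_const_mul]
  refine (expect_mono fun x => ?_).trans (expect_exp_smoothNorm_sub_le he hy hbound univ)
  rw [← Real.exp_neg, ← Real.exp_add]
  have hnorm := norm_le_smoothNorm (∑ a, centered (g (e a)) (x (e a)) • y a x)
  exact Real.exp_le_exp.2 (by linarith [hvar x])

end VectorBernstein

section TraceInequalities

lemma pow_sub_pow_eq_sum_mul_sub_mul {R : Type*} [Ring R] (x y : R) (N : ℕ) :
    x ^ N - y ^ N = ∑ i ∈ range N, x ^ i * (x - y) * y ^ (N - 1 - i) := by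
  have htelescope : ∀ i ∈ range N, x ^ i * (x - y) * y ^ (N - 1 - i) =
      x ^ (i + 1) * y ^ (N - (i + 1)) - x ^ i * y ^ (N - i) := fun i hi => by
    have hexp : N - i = N - 1 - i + 1 := by grind
    rw [hexp, show N - (i + 1) = N - 1 - i by lia, pow_succ, pow_succ']
    noncomm_ring
  rw [sum_congr rfl htelescope, sum_range_sub fun i => x ^ i * y ^ (N - i)]
  simp

lemma pow_mul_pow_le_add (x y : ℝ) {j l r : ℕ} (h : j + l = 2 * r) :
    x ^ j * y ^ l ≤ x ^ (2 * r) + y ^ (2 * r) := by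
  rw [← (even_two_mul r).pow_abs x, ← (even_two_mul r).pow_abs y]
  have habs : x ^ j * y ^ l ≤ |x| ^ j * |y| ^ l :=
    (le_abs_self _).trans_eq (by rw [abs_mul, abs_pow, abs_pow])
  refine habs.trans ?_
  rcases le_total |x| |y| with hxy | hxy
  · calc |x| ^ j * |y| ^ l ≤ |y| ^ j * |y| ^ l := by gcongr
      _ = |y| ^ (2 * r) := by rw [← pow_add, h]
      _ ≤ _ := le_add_of_nonneg_left (by positivity)
  · calc |x| ^ j * |y| ^ l ≤ |x| ^ j * |x| ^ l := by gcongr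
      _ = |x| ^ (2 * r) := by rw [← pow_add, h]
      _ ≤ _ := le_add_of_nonneg_right (by positivity)

variable {V : Type*} [Fintype V] [DecidableEq V] {A X Y : Matrix V V ℝ}

lemma pow_eq_conj_diagonal (hX : X.IsHermitian) (j : ℕ) :
    X ^ j = (hX.eigenvectorUnitary : Matrix V V ℝ) * diagonal (fun a => hX.eigenvalues a ^ j) *
      (hX.eigenvectorUnitary : Matrix V V ℝ)ᵀ := by
  conv_lhs => rw [hX.spectral_theorem, ← map_pow, diagonal_pow, Unitary.conjStarAlgAut_apply]
  simp [star_eq_conjTranspose, Pi.pow_def]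

lemma trace_pow_eq_sum_eigenvalues_pow (hX : X.IsHermitian) (j : ℕ) :
    (X ^ j).trace = ∑ a, hX.eigenvalues a ^ j := by
  have hU : (hX.eigenvectorUnitary : Matrix V V ℝ)ᵀ * hX.eigenvectorUnitary = 1 :=
    mem_unitaryGroup_iff'.1 hX.eigenvectorUnitary.2
  rw [pow_eq_conj_diagonal hX, trace_mul_comm, ← Matrix.mul_assoc, hU, Matrix.one_mul,
    trace_diagonal]

lemma exists_trace_mul_pow_eq_sum (hA : A.IsSymm) (hX : X.IsHermitian) (hY : Y.IsHermitian) :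
    ∃ M : Matrix V V ℝ, ∀ j l, (A * X ^ j * A * Y ^ l).trace =
      ∑ b, ∑ a, hX.eigenvalues a ^ j * hY.eigenvalues b ^ l * M a b ^ 2 := by
  set U : Matrix V V ℝ := (hX.eigenvectorUnitary : Matrix V V ℝ)
  set W : Matrix V V ℝ := (hY.eigenvectorUnitary : Matrix V V ℝ)
  refine ⟨Uᵀ * A * W, fun j l => ?_⟩
  have htranspose : Wᵀ * A * U = (Uᵀ * A * W)ᵀ := by
    simp [hA.eq, Matrix.mul_assoc]
  rw [pow_eq_conj_diagonal hX, pow_eq_conj_diagonal hY]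
  calc (A * (U * diagonal (fun a => hX.eigenvalues a ^ j) * Uᵀ) * A *
          (W * diagonal (fun b => hY.eigenvalues b ^ l) * Wᵀ)).trace
      = ((Uᵀ * A * W)ᵀ * diagonal (fun a => hX.eigenvalues a ^ j) * (Uᵀ * A * W) *
          diagonal (fun b => hY.eigenvalues b ^ l)).trace := by
        rw [← htranspose]
        simp only [← Matrix.mul_assoc]
        rw [trace_mul_comm]
        simp only [← Matrix.mul_assoc]
    _ = _ := by
        refine sum_congr rfl fun b _ => ?_
        rw [diag_apply, mul_diagonal, Matrix.mul_apply, sum_mul]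
        refine sum_congr rfl fun a _ => ?_
        rw [mul_diagonal, transpose_apply]
        ring

lemma trace_mul_pow_mul_pow_le (hA : A.IsSymm) (hX : X.IsHermitian) (hY : Y.IsHermitian)
    {j l r : ℕ} (h : j + l = 2 * r) :
    (A * X ^ j * A * Y ^ l).trace ≤
      (A * A * X ^ (2 * r)).trace + (A * A * Y ^ (2 * r)).trace := by
  obtain ⟨M, hM⟩ := exists_trace_mul_pow_eq_sum hA hX hY
  have hleft : (A * A * X ^ (2 * r)).trace = (A * X ^ (2 * r) * A * Y ^ 0).trace := by
    rw [pow_zero, Matrix.mul_one, Matrix.mul_assoc, trace_mul_comm]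
  have hright : A * A * Y ^ (2 * r) = A * X ^ 0 * A * Y ^ (2 * r) := by
    rw [pow_zero, Matrix.mul_one]
  rw [hleft, hright, hM, hM, hM, ← sum_add_distrib]
  refine sum_le_sum fun b _ => ?_
  rw [← sum_add_distrib]
  refine sum_le_sum fun a _ => ?_
  rw [← add_mul, pow_zero, pow_zero, mul_one, one_mul]
  exact mul_le_mul_of_nonneg_right (pow_mul_pow_le_add _ _ h) (sq_nonneg _)

lemma trace_sub_mul_pow_sub_pow_le (hX : X.IsHermitian) (hY : Y.IsHermitian) (r : ℕ) :
    ((X - Y) * (X ^ (2 * r + 1) - Y ^ (2 * r + 1))).trace ≤ (2 * r + 1) *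
      (((X - Y) * (X - Y) * X ^ (2 * r)).trace + ((X - Y) * (X - Y) * Y ^ (2 * r)).trace) := by
  have hsymm : (X - Y).IsSymm := isHermitian_iff_isSymm.1 (hX.sub hY)
  rw [pow_sub_pow_eq_sum_mul_sub_mul, mul_sum, trace_sum]
  refine (sum_le_card_nsmul _ _ (((X - Y) * (X - Y) * X ^ (2 * r)).trace +
    ((X - Y) * (X - Y) * Y ^ (2 * r)).trace) fun i hi => ?_).trans_eq ?_
  · rw [← Matrix.mul_assoc, ← Matrix.mul_assoc]
    exact trace_mul_pow_mul_pow_le hsymm hX hY (by grind)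
  · rw [card_range, nsmul_eq_mul]
    push_cast
    rfl

lemma pow_apply_le_card_pow (hX : ∀ u v, |X u v| ≤ 1) (r : ℕ) (u v : V) :
    |(X ^ r) u v| ≤ (Fintype.card V : ℝ) ^ r := by
  induction r generalizing u v with
  | zero =>
    rcases eq_or_ne u v with rfl | h <;> simp [*]
  | succ r ih =>
    rw [pow_succ, Matrix.mul_apply]
    calc |∑ w, (X ^ r) u w * X w v| ≤ ∑ w, |(X ^ r) u w * X w v| := abs_sum_le_sum_abs _ _
      _ ≤ ∑ _w : V, (Fintype.card V : ℝ) ^ r := sum_le_sum fun w _ => by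
          rw [abs_mul]
          exact (mul_le_of_le_one_right (abs_nonneg _) (hX w v)).trans (ih u w)
      _ = (Fintype.card V : ℝ) ^ (r + 1) := by
          rw [sum_const, card_univ, nsmul_eq_mul, pow_succ']

lemma pow_two_mul_apply_self_nonneg (hX : X.IsHermitian) (r : ℕ) (u : V) :
    0 ≤ (X ^ (2 * r)) u u := by
  rw [pow_mul', sq, Matrix.mul_apply]
  refine sum_nonneg fun v _ => ?_
  rw [← (isHermitian_iff_isSymm.1 (hX.pow r)).apply u v]
  exact mul_self_nonneg _

open scoped Matrix.Norms.L2Operator in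
lemma norm_toEuclideanCLM_le {B : ℝ} (hB : 0 ≤ B) (hX : X.IsHermitian)
    (h : ∀ a, |hX.eigenvalues a| ≤ B) : ‖toEuclideanCLM (𝕜 := ℝ) X‖ ≤ B := by
  rw [l2_opNorm_toEuclideanCLM, hX.spectral_theorem, Unitary.conjStarAlgAut_apply,
    ← Unitary.coe_star, CStarRing.norm_mul_coe_unitary,
    CStarRing.norm_coe_unitary_mul, l2_opNorm_diagonal]
  exact (pi_norm_le_iff_of_nonneg hB).2 h

lemma pow_le_trace_pow_of_lt_norm {B : ℝ} (hB : 0 ≤ B) (hX : X.IsHermitian)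
    (h : B < ‖toEuclideanCLM (𝕜 := ℝ) X‖) (r : ℕ) :
    B ^ (2 * r) ≤ (X ^ (2 * r)).trace := by
  obtain ⟨a, ha⟩ : ∃ a, B < |hX.eigenvalues a| := by
    by_contra! hle
    exact h.not_ge (norm_toEuclideanCLM_le hB hX hle)
  rw [trace_pow_eq_sum_eigenvalues_pow hX]
  calc B ^ (2 * r) ≤ |hX.eigenvalues a| ^ (2 * r) := by gcongr
    _ = hX.eigenvalues a ^ (2 * r) := (even_two_mul r).pow_abs _
    _ ≤ _ := single_le_sum (f := fun a => hX.eigenvalues a ^ (2 * r))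
        (fun _ _ => (even_two_mul r).pow_nonneg _) (mem_univ a)

end TraceInequalities

section NoiseMatrix

variable {V : Type*}

/-- The symmetric matrix of centered Bernoulli variables of parameters `g`, one for each unordered
pair of indices, as a function of their values `x`. -/
def noiseMatrix (g : Sym2 V → unitInterval) (x : Sym2 V → Bool) : Matrix V V ℝ :=
  of fun u v => centered (g s(u, v)) (x s(u, v))

variable {g : Sym2 V → unitInterval}

lemma isHermitian_noiseMatrix (x : Sym2 V → Bool) : (noiseMatrix g x).IsHermitian := by
  ext u v
  simp [noiseMatrix, Sym2.eq_swap]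

lemma abs_noiseMatrix_le_one (x : Sym2 V → Bool) (u v : V) : |noiseMatrix g x u v| ≤ 1 :=
  abs_centered_le_one _ _

variable [DecidableEq V]

/-- The adjacency matrix of the graph with the single edge (or loop) `e`. -/
def edgeMatrix (e : Sym2 V) : Matrix V V ℝ :=
  of fun u v => if s(u, v) = e then 1 else 0

lemma noiseMatrix_update_sub_update (e : Sym2 V) (x : Sym2 V → Bool) :
    noiseMatrix g (Function.update x e true) - noiseMatrix g (Function.update x e false) =
      edgeMatrix e := by
  ext u v
  rcases eq_or_ne s(u, v) e with rfl | h <;> simp [noiseMatrix, edgeMatrix, centered, *]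

variable [Fintype V]

lemma edgeMatrix_mul_self (e : Sym2 V) :
    edgeMatrix e * edgeMatrix e = diagonal fun u => ∑ v, edgeMatrix e u v := by
  ext u w
  simp only [Matrix.mul_apply, edgeMatrix, of_apply, diagonal_apply]
  split_ifs with h
  · subst h
    exact sum_congr rfl fun v _ => by rw [Sym2.eq_swap (a := v)]; split_ifs <;> simp
  · refine sum_eq_zero fun v _ => ?_
    split_ifs with h₁ h₂
    · rw [← h₂, Sym2.eq_swap (a := v), Sym2.congr_left] at h₁
      exact absurd h₁ h
    all_goals simp

lemma sum_mul_edgeMatrix_apply (c : Sym2 V → ℝ) (u v : V) :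
    ∑ e, c e * edgeMatrix e u v = c s(u, v) := by
  simp [edgeMatrix]

lemma sum_centered_mul_trace_edgeMatrix (x : Sym2 V → Bool) (Z : Matrix V V ℝ) :
    ∑ e, centered (g e) (x e) * (edgeMatrix e * Z).trace = (noiseMatrix g x * Z).trace := by
  have hsum : ∑ e, centered (g e) (x e) • edgeMatrix e = noiseMatrix g x := by
    ext u v
    simp only [Matrix.sum_apply, Matrix.smul_apply, smul_eq_mul, sum_mul_edgeMatrix_apply]
    rfl
  rw [← hsum, sum_mul, trace_sum]
  simp

lemma sum_mul_trace_edgeMatrix_mul_self (c : Sym2 V → ℝ) (Z : Matrix V V ℝ) :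
    ∑ e, c e * (edgeMatrix e * edgeMatrix e * Z).trace = ∑ u, (∑ v, c s(u, v)) * Z u u := by
  simp only [edgeMatrix_mul_self, trace, diag_apply, diagonal_mul, mul_sum]
  rw [sum_comm]
  refine sum_congr rfl fun u _ => ?_
  simp only [← sum_mul_edgeMatrix_apply c u, sum_mul, mul_sum]
  rw [sum_comm]
  simp only [mul_assoc]

lemma expect_centered_mul_trace_pow_le (e : Sym2 V) (r : ℕ) :
    expect g (fun x => centered (g e) (x e) *
        (edgeMatrix e * noiseMatrix g x ^ (2 * r + 1)).trace) ≤
      (2 * r + 1) * expect g (fun x => |centered (g e) (x e)| *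
        (edgeMatrix e * edgeMatrix e * noiseMatrix g x ^ (2 * r)).trace) := by
  have hvar : (0 : ℝ) ≤ g e * (1 - g e) := mul_nonneg (g e).2.1 (by linarith [(g e).2.2])
  rw [expect_centered_mul, expect_abs_centered_mul, mul_left_comm,
    ← expect_const_mul (2 * r + 1 : ℝ)]
  refine mul_le_mul_of_nonneg_left (expect_mono fun x => ?_) hvar
  have hdiff := trace_sub_mul_pow_sub_pow_le
    (isHermitian_noiseMatrix (g := g) (Function.update x e true))
    (isHermitian_noiseMatrix (g := g) (Function.update x e false)) r
  rwa [noiseMatrix_update_sub_update, mul_sub, trace_sub] at hdiff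

-- Resampling the edge `e` turns the factor `ξ_e` in `tr X ^ (2 * r + 2) = ∑ e, ξ_e tr (A_e X ^ …)`
-- into a difference of powers, which telescopes.
lemma expect_trace_pow_succ_le (r : ℕ) :
    expect g (fun x => (noiseMatrix g x ^ (2 * (r + 1))).trace) ≤ (2 * r + 1) *
      expect g (fun x => ∑ u, (∑ v, |noiseMatrix g x u v|) * (noiseMatrix g x ^ (2 * r)) u u) := by
  calc expect g (fun x => (noiseMatrix g x ^ (2 * (r + 1))).trace)
      = ∑ e, expect g (fun x => centered (g e) (x e) *
          (edgeMatrix e * noiseMatrix g x ^ (2 * r + 1)).trace) := by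
        rw [← expect_sum]
        congr! 2 with x
        rw [sum_centered_mul_trace_edgeMatrix, ← pow_succ']
        rfl
    _ ≤ ∑ e, (2 * r + 1) * expect g (fun x => |centered (g e) (x e)| *
          (edgeMatrix e * edgeMatrix e * noiseMatrix g x ^ (2 * r)).trace) :=
        sum_le_sum fun e _ => expect_centered_mul_trace_pow_le e r
    _ = _ := by
        rw [← mul_sum, ← expect_sum]
        congr! 3 with x
        exact sum_mul_trace_edgeMatrix_mul_self (fun e => |centered (g e) (x e)|) _

end NoiseMatrix

section NormTail

variable {V : Type*} [Fintype V] {g : Sym2 V → unitInterval} {p : ℝ}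

lemma abs_centered_le (g : unitInterval) (b : Bool) :
    |centered g b| ≤ 2 * g + centered g b * (1 - 2 * g) := by
  obtain ⟨h0, h1⟩ := g.2
  cases b
  · simp only [centered, Bool.false_eq_true, if_false]
    rw [abs_of_nonpos (by linarith)]
    nlinarith
  · simp only [centered, if_true]
    rw [abs_of_nonneg (by linarith)]
    nlinarith

-- As `|ξ|` is an affine function of `ξ`, the scalar case of the vector Bernstein inequality
-- also controls the absolute row sums.
lemma rowSum_le_add_norm_sum (hg : ∀ e, g e ≤ p) (x : Sym2 V → Bool) (u : V) :
    (∑ v, |noiseMatrix g x u v|) / 2 ≤ Fintype.card V * p +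
      ‖∑ v, centered (g s(u, v)) (x s(u, v)) • ((1 - 2 * g s(u, v)) / 2 : ℝ)‖ := by
  have habs : ∀ v, |noiseMatrix g x u v| / 2 ≤
      p + centered (g s(u, v)) (x s(u, v)) • ((1 - 2 * g s(u, v)) / 2 : ℝ) := fun v => by
    have h := abs_centered_le (g s(u, v)) (x s(u, v))
    rw [smul_eq_mul]
    change |centered _ _| / 2 ≤ _
    linarith [hg s(u, v)]
  rw [sum_div]
  refine (sum_le_sum fun v _ => habs v).trans ?_
  rw [sum_add_distrib, sum_const, card_univ, nsmul_eq_mul]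
  gcongr
  exact Real.le_norm_self _

variable [DecidableEq V]

lemma expect_exp_rowSum_le (hg : ∀ e, g e ≤ p) (u : V) :
    expect g (fun x => Real.exp ((∑ v, |noiseMatrix g x u v|) / 2)) ≤
      Real.exp (1 + 7 / 4 * (Fintype.card V * p)) := by
  let y : V → ℝ := fun v => (1 - 2 * g s(u, v)) / 2
  have hy : ∀ v, ‖y v‖ ≤ 1 / 2 := fun v => by
    obtain ⟨h0, h1⟩ := (g s(u, v)).2
    exact abs_le.2 ⟨by simp only [y]; linarith, by simp only [y]; linarith⟩
  have hvar : ∑ v, g s(u, v) * ‖y v‖ ^ 2 ≤ Fintype.card V * (p * (1 / 4)) := by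
    rw [← nsmul_eq_mul, ← card_univ, ← sum_const]
    refine sum_le_sum fun v _ => mul_le_mul (hg _) ?_ (sq_nonneg _) ((g s(u, v)).2.1.trans (hg _))
    nlinarith [hy v, norm_nonneg (y v)]
  have hmgf := expect_exp_norm_sum_le (g := g) (y := fun v _ => y v)
    (fun _ _ h => Sym2.congr_right.1 h) (fun _ _ _ _ => rfl) (fun v _ => hy v) (fun _ => hvar)
  calc expect g (fun x => Real.exp ((∑ v, |noiseMatrix g x u v|) / 2))
      ≤ Real.exp (Fintype.card V * p) *
          expect g (fun x => Real.exp ‖∑ v, centered (g s(u, v)) (x s(u, v)) • y v‖) := by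
        rw [← expect_const_mul]
        refine expect_mono fun x => ?_
        rw [← Real.exp_add]
        exact Real.exp_le_exp.2 (rowSum_le_add_norm_sum hg x u)
    _ ≤ Real.exp (Fintype.card V * p) * Real.exp (1 + 3 * (Fintype.card V * (p * (1 / 4)))) :=
        mul_le_mul_of_nonneg_left hmgf (Real.exp_pos _).le
    _ = _ := by rw [← Real.exp_add]; ring_nf

lemma prob_rowSum_gt_le (hg : ∀ e, g e ≤ p) (u : V) :
    prob g {x | 6 * (Fintype.card V * p) < ∑ v, |noiseMatrix g x u v|} ≤
      Real.exp (1 - 5 / 4 * (Fintype.card V * p)) := by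
  calc prob g {x | 6 * (Fintype.card V * p) < ∑ v, |noiseMatrix g x u v|}
      ≤ prob g {x | 3 * (Fintype.card V * p) < (∑ v, |noiseMatrix g x u v|) / 2} :=
        prob_mono fun x hx => by
          simp only [Set.mem_ofPred_eq] at hx ⊢
          linarith
    _ ≤ Real.exp (-(3 * (Fintype.card V * p))) * Real.exp (1 + 7 / 4 * (Fintype.card V * p)) :=
        (prob_lt_le_exp_neg_mul _ _).trans
          (mul_le_mul_of_nonneg_left (expect_exp_rowSum_le hg u) (Real.exp_pos _).le)
    _ = _ := by rw [← Real.exp_add]; ring_nf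

lemma prob_exists_rowSum_gt_le (hg : ∀ e, g e ≤ p) (hp : 4 ≤ Fintype.card V * p) :
    prob g {x | ∃ u, 6 * (Fintype.card V * p) < ∑ v, |noiseMatrix g x u v|} ≤
      Fintype.card V * Real.exp (-(Fintype.card V * p)) := by
  rw [Set.ofPred_exists]
  refine (prob_iUnion_le _).trans ((sum_le_card_nsmul _ _ (Real.exp (-(Fintype.card V * p)))
    fun u _ => (prob_rowSum_gt_le hg u).trans (Real.exp_le_exp.2 ?_)).trans_eq ?_)
  · linarith
  · rw [card_univ, nsmul_eq_mul]

lemma sum_rowSum_mul_pow_le (x : Sym2 V → Bool) (r : ℕ) :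
    ∑ u, (∑ v, |noiseMatrix g x u v|) * (noiseMatrix g x ^ (2 * r)) u u ≤
      (Fintype.card V : ℝ) ^ (2 * r + 2) := by
  set N : ℝ := (Fintype.card V : ℝ)
  have hrow : ∀ u, ∑ v, |noiseMatrix g x u v| ≤ N := fun u => by
    simpa using sum_le_sum fun v (_ : v ∈ univ) => abs_noiseMatrix_le_one (g := g) x u v
  calc ∑ u, (∑ v, |noiseMatrix g x u v|) * (noiseMatrix g x ^ (2 * r)) u u
      ≤ ∑ _u : V, N * N ^ (2 * r) := sum_le_sum fun u _ =>
        mul_le_mul (hrow u)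
          ((le_abs_self _).trans (pow_apply_le_card_pow (abs_noiseMatrix_le_one x) _ u u))
          (pow_two_mul_apply_self_nonneg (isHermitian_noiseMatrix x) r u) (Nat.cast_nonneg _)
    _ = N ^ (2 * r + 2) := by rw [sum_const, card_univ, nsmul_eq_mul]; ring

lemma expect_sum_rowSum_mul_pow_le (hg : ∀ e, g e ≤ p) (hp : 4 ≤ Fintype.card V * p) (r : ℕ) :
    expect g (fun x =>
        ∑ u, (∑ v, |noiseMatrix g x u v|) * (noiseMatrix g x ^ (2 * r)) u u) ≤
      6 * (Fintype.card V * p) * expect g (fun x => (noiseMatrix g x ^ (2 * r)).trace) +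
        (Fintype.card V : ℝ) ^ (2 * r + 3) * Real.exp (-(Fintype.card V * p)) := by
  set N : ℝ := (Fintype.card V : ℝ)
  let heavy : Set (Sym2 V → Bool) := {x | ∃ u, 6 * (N * p) < ∑ v, |noiseMatrix g x u v|}
  have hdiag : ∀ x u, 0 ≤ (noiseMatrix g x ^ (2 * r)) u u := fun x =>
    pow_two_mul_apply_self_nonneg (isHermitian_noiseMatrix x) r
  have htrunc : ∀ x, ∑ u, (∑ v, |noiseMatrix g x u v|) * (noiseMatrix g x ^ (2 * r)) u u ≤
      6 * (N * p) * (noiseMatrix g x ^ (2 * r)).trace +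
        N ^ (2 * r + 2) * heavy.indicator 1 x := by
    intro x
    by_cases hx : x ∈ heavy
    · rw [Set.indicator_of_mem hx, Pi.one_apply, mul_one]
      refine (sum_rowSum_mul_pow_le x r).trans (le_add_of_nonneg_left ?_)
      exact mul_nonneg (by positivity) (sum_nonneg fun u _ => hdiag x u)
    · rw [Set.indicator_of_notMem hx, mul_zero, add_zero, trace, mul_sum]
      have hlight : ∀ u, ∑ v, |noiseMatrix g x u v| ≤ 6 * (N * p) := by simpa [heavy] using hx
      exact sum_le_sum fun u _ => mul_le_mul_of_nonneg_right (hlight u) (hdiag x u)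
  refine (expect_mono htrunc).trans ?_
  rw [expect_add, expect_const_mul, expect_const_mul]
  refine add_le_add_right ?_ _
  calc N ^ (2 * r + 2) * prob g heavy ≤ N ^ (2 * r + 2) * (N * Real.exp (-(N * p))) := by
        gcongr
        exact prob_exists_rowSum_gt_le hg hp
    _ = N ^ (2 * r + 3) * Real.exp (-(N * p)) := by ring

lemma expect_trace_pow_le (hg : ∀ e, g e ≤ p) (hp : 4 ≤ Fintype.card V * p) {m : ℕ}
    (hm : (2 * m + 1) * Real.log (Fintype.card V) ≤ Fintype.card V * p) {r : ℕ} (hr : r ≤ m) :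
    expect g (fun x => (noiseMatrix g x ^ (2 * r)).trace) ≤
      Fintype.card V * (14 * m * (Fintype.card V * p)) ^ r := by
  set N : ℝ := (Fintype.card V : ℝ)
  have hN : 1 ≤ N := by
    have : Fintype.card V ≠ 0 := fun h => by norm_num [N, h] at hp
    exact Nat.one_le_cast.2 (Nat.one_le_iff_ne_zero.2 this)
  induction r with
  | zero => simp [expect_const, N]
  | succ r ih =>
    set P : ℝ := (14 * m * (N * p)) ^ r
    have hrm : (r : ℝ) + 1 ≤ m := by exact_mod_cast hr
    have hP : 1 ≤ P := one_le_pow₀ (by nlinarith)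
    have hheavy : N ^ (2 * r + 3) * Real.exp (-(N * p)) ≤ N * p * (N * P) := by
      have hpow : N ^ (2 * r + 3) ≤ Real.exp (N * p) := by
        calc N ^ (2 * r + 3) ≤ N ^ (2 * m + 1) := pow_le_pow_right₀ hN (by lia)
          _ = Real.exp ((2 * m + 1) * Real.log N) := by
              rw [← Real.exp_log (by positivity : 0 < N), ← Real.exp_nat_mul, Real.log_exp]
              push_cast
              rfl
          _ ≤ _ := Real.exp_le_exp.2 hm
      calc N ^ (2 * r + 3) * Real.exp (-(N * p)) ≤ Real.exp (N * p) * Real.exp (-(N * p)) := by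
            gcongr
        _ = 1 := by rw [← Real.exp_add, add_neg_cancel, Real.exp_zero]
        _ ≤ N * p * (N * P) :=
            one_le_mul_of_one_le_of_one_le (by linarith) (one_le_mul_of_one_le_of_one_le hN hP)
    calc expect g (fun x => (noiseMatrix g x ^ (2 * (r + 1))).trace)
        ≤ (2 * r + 1) * (6 * (N * p) * (N * P) + N * p * (N * P)) := by
          refine (expect_trace_pow_succ_le r).trans (mul_le_mul_of_nonneg_left ?_ (by positivity))
          refine (expect_sum_rowSum_mul_pow_le hg hp r).trans (add_le_add ?_ hheavy)
          exact mul_le_mul_of_nonneg_left (ih (by lia)) (by linarith)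
      _ ≤ 2 * m * (6 * (N * p) * (N * P) + N * p * (N * P)) := by
          gcongr
          linarith
      _ = N * (14 * m * (N * p)) ^ (r + 1) := by
          rw [pow_succ]
          ring

lemma pow_three_le_of_log_le {N : ℝ} (hN : 0 < N) {m : ℕ} (hm : Real.log N ≤ m) :
    N ^ 3 ≤ 21 ^ m := by
  have hexp : Real.exp 3 ≤ 21 := by
    calc Real.exp 3 = Real.exp 1 ^ 3 := by rw [← Real.exp_nat_mul]; norm_num
      _ ≤ 2.72 ^ 3 := by gcongr; linarith [Real.exp_one_lt_d9]
      _ ≤ 21 := by norm_num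
  calc N ^ 3 = Real.exp (3 * Real.log N) := by
        rw [mul_comm, Real.exp_mul, Real.exp_log hN]; norm_cast
    _ ≤ Real.exp (m * 3) := Real.exp_le_exp.2 (by linarith)
    _ = Real.exp 3 ^ m := Real.exp_nat_mul _ _
    _ ≤ 21 ^ m := by gcongr

theorem prob_norm_noiseMatrix_gt_le (hg : ∀ e, g e ≤ p)
    (hlog : 1 ≤ Real.log (Fintype.card V))
    (hp : 5 * Real.log (Fintype.card V) ^ 2 ≤ Fintype.card V * p) :
    prob g {x | √(600 * (Fintype.card V * p) * Real.log (Fintype.card V)) <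
        ‖toEuclideanCLM (𝕜 := ℝ) (noiseMatrix g x)‖} ≤
      1 / (Fintype.card V : ℝ) ^ 2 := by
  set N : ℝ := (Fintype.card V : ℝ)
  set L : ℝ := Real.log N
  set m : ℕ := ⌈L⌉₊
  set B : ℝ := √(600 * (N * p) * L)
  have hN : 0 < N := Nat.cast_pos.2 <| Nat.pos_of_ne_zero fun h => by norm_num [L, N, h] at hlog
  have hNp : 0 < N * p := by nlinarith
  have hLm : L ≤ m := Nat.le_ceil L
  have hmL : (m : ℝ) ≤ 2 * L := by linarith [Nat.ceil_lt_add_one (by linarith : 0 ≤ L)]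
  have hB : B ^ (2 * m) = (600 * (N * p) * L) ^ m := by
    rw [pow_mul, Real.sq_sqrt (by positivity)]
  have hmoment : B ^ (2 * m) * prob g {x | B < ‖toEuclideanCLM (𝕜 := ℝ) (noiseMatrix g x)‖} ≤
      N * (14 * m * (N * p)) ^ m := by
    refine le_trans ?_ (expect_trace_pow_le hg (by nlinarith) (by nlinarith) le_rfl)
    refine le_trans ?_ (mul_prob_le_expect (f := fun x => (noiseMatrix g x ^ (2 * m)).trace)
      (fun x => sum_nonneg fun u _ =>
        pow_two_mul_apply_self_nonneg (isHermitian_noiseMatrix x) m u) (B ^ (2 * m)))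
    gcongr
    refine prob_mono fun x hx => ?_
    exact pow_le_trace_pow_of_lt_norm (Real.sqrt_nonneg _) (isHermitian_noiseMatrix x) hx m
  have hcompare : N * (14 * m * (N * p)) ^ m * N ^ 2 ≤ B ^ (2 * m) := by
    calc N * (14 * m * (N * p)) ^ m * N ^ 2 = N ^ 3 * (14 * m * (N * p)) ^ m := by ring
      _ ≤ 21 ^ m * (14 * (2 * L) * (N * p)) ^ m := by
        gcongr
        exact pow_three_le_of_log_le hN hLm
      _ = (588 * (N * p) * L) ^ m := by rw [← mul_pow]; ring_nf
      _ ≤ (600 * (N * p) * L) ^ m := by gcongr; norm_num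
      _ = _ := hB.symm
  rw [le_div_iff₀ (by positivity)]
  refine le_of_mul_le_mul_left ?_ (by rw [hB]; positivity : 0 < B ^ (2 * m))
  rw [mul_one, ← mul_assoc]
  exact (mul_le_mul_of_nonneg_right hmoment (by positivity)).trans hcompare

end NormTail

section SpectralProjection

open scoped RealInnerProductSpace

variable {ι κ H : Type*} [Fintype ι] [Fintype κ] [NormedAddCommGroup H] [InnerProductSpace ℝ H]
  {A A' : H →L[ℝ] H} {lam : ι → ℝ} {μ : κ → ℝ} {b : OrthonormalBasis ι ℝ H}
  {c : OrthonormalBasis κ ℝ H} {S : Finset κ} {T : Finset ι}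

/-- The orthogonal projection onto the span of the vectors of the orthonormal basis `b` whose
index lies in `T`. -/
noncomputable def basisProj (b : OrthonormalBasis ι ℝ H) (T : Finset ι) : H →L[ℝ] H :=
  ∑ i ∈ T, InnerProductSpace.rankOne ℝ (b i) (b i)

lemma basisProj_apply (x : H) : basisProj b T x = ∑ i ∈ T, ⟪b i, x⟫ • b i := by
  simp [basisProj]

lemma inner_basisProj [DecidableEq ι] (i : ι) (x : H) :
    ⟪b i, basisProj b T x⟫ = if i ∈ T then ⟪b i, x⟫ else 0 := by
  simp [basisProj_apply, inner_sum, inner_smul_right, b.inner_eq_ite]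

lemma norm_basisProj_sq (x : H) : ‖basisProj b T x‖ ^ 2 = ∑ i ∈ T, ⟪b i, x⟫ ^ 2 := by
  classical
  simp [← b.sum_sq_norm_inner_right, inner_basisProj, apply_ite, sum_ite_mem]

lemma norm_basisProj_le (x : H) : ‖basisProj b T x‖ ≤ ‖x‖ := by
  refine le_of_sq_le_sq ?_ (norm_nonneg x)
  rw [norm_basisProj_sq, ← b.sum_sq_norm_inner_right x]
  simp only [Real.norm_eq_abs, sq_abs]
  exact sum_le_sum_of_subset_of_nonneg (subset_univ T) fun _ _ _ => sq_nonneg _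

lemma sum_norm_basisProj_sq : ∑ a, ‖basisProj b T (c a)‖ ^ 2 = #T := by
  simp only [norm_basisProj_sq]
  rw [sum_comm]
  simp [c.sum_sq_inner_left]

-- Off `S`, the vector `z - basisProj c S z` has the coordinates of `z`, and on `S` it has none.
lemma norm_basisProj_sub_sq_le [DecidableEq κ] (z : H) :
    ‖basisProj b T (z - basisProj c S z)‖ ^ 2 ≤ (∑ i ∈ T, ∑ j ∈ Sᶜ, ⟪b i, c j⟫ ^ 2) * ‖z‖ ^ 2 := by
  rw [norm_basisProj_sq, sum_mul]
  refine sum_le_sum fun i _ => ?_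
  have hcoord : ⟪b i, z - basisProj c S z⟫ = ∑ j ∈ Sᶜ, ⟪b i, c j⟫ * ⟪c j, z⟫ := by
    rw [← c.sum_inner_mul_inner, ← sum_subset (subset_univ Sᶜ)]
    · refine sum_congr rfl fun j hj => ?_
      rw [inner_sub_right, inner_basisProj, if_neg (mem_compl.1 hj), sub_zero]
    · intro j _ hj
      rw [inner_sub_right, inner_basisProj, if_pos (by simpa using hj), sub_self, mul_zero]
  rw [hcoord]
  refine (sum_mul_sq_le_sq_mul_sq _ _ _).trans ?_
  gcongr
  rw [← norm_basisProj_sq]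
  gcongr
  exact norm_basisProj_le z

/-- `b` is a basis of eigenvectors of `A`, with eigenvalues `lam`. -/
def IsEigenbasis (A : H →L[ℝ] H) (lam : ι → ℝ) (b : OrthonormalBasis ι ℝ H) : Prop :=
  ∀ i, A (b i) = lam i • b i

lemma IsEigenbasis.inner_apply (h : IsEigenbasis A lam b) (i : ι) (x : H) :
    ⟪b i, A x⟫ = lam i * ⟪b i, x⟫ := by
  classical
  conv_lhs => rw [← b.sum_repr' x]
  simp [inner_sum, inner_smul_right, h _, b.inner_eq_ite, mul_comm]

lemma IsEigenbasis.mul_norm_basisProj_le (h : IsEigenbasis A lam b) {t : ℝ} (ht : 0 ≤ t)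
    (hT : ∀ i ∈ T, t ≤ lam i) (x : H) : t * ‖basisProj b T x‖ ≤ ‖basisProj b T (A x)‖ := by
  refine le_of_sq_le_sq ?_ (norm_nonneg _)
  rw [mul_pow, norm_basisProj_sq, norm_basisProj_sq, mul_sum]
  refine sum_le_sum fun i hi => ?_
  rw [h.inner_apply, mul_pow]
  have := hT i hi
  gcongr

-- The Davis–Kahan identity `(lam i - μ j) ⟪b i, c j⟫ = ⟪b i, (A - A') (c j)⟫`.
lemma IsEigenbasis.sq_mul_sum_inner_sq_le (h : IsEigenbasis A lam b) (h' : IsEigenbasis A' μ c)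
    {δ : ℝ} (hδ : 0 ≤ δ) (hgap : ∀ i ∈ T, ∀ j ∈ S, δ ≤ lam i - μ j) :
    δ ^ 2 * ∑ i ∈ T, ∑ j ∈ S, ⟪b i, c j⟫ ^ 2 ≤
      ∑ i ∈ T, ∑ j ∈ S, ⟪b i, (A - A') (c j)⟫ ^ 2 := by
  simp only [mul_sum]
  refine sum_le_sum fun i hi => sum_le_sum fun j hj => ?_
  have hid : ⟪b i, (A - A') (c j)⟫ = (lam i - μ j) * ⟪b i, c j⟫ := by
    rw [_root_.sub_apply, inner_sub_right, h.inner_apply, h' j, inner_smul_right, sub_mul]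
  rw [hid, mul_pow]
  have := hgap i hi j hj
  gcongr

lemma sum_inner_rankTwo_sq_le (x y z w : H) :
    ∑ i ∈ T, ∑ j ∈ S, ⟪b i, ⟪z, c j⟫ • x + ⟪w, c j⟫ • y⟫ ^ 2 ≤
      2 * (‖basisProj b T x‖ ^ 2 * ‖z‖ ^ 2 + ‖basisProj b T y‖ ^ 2 * ‖w‖ ^ 2) := by
  have hbessel : ∀ z : H, ∑ j ∈ S, ⟪z, c j⟫ ^ 2 ≤ ‖z‖ ^ 2 := fun z => by
    simp only [real_inner_comm (c _) z, ← norm_basisProj_sq]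
    gcongr
    exact norm_basisProj_le z
  calc ∑ i ∈ T, ∑ j ∈ S, ⟪b i, ⟪z, c j⟫ • x + ⟪w, c j⟫ • y⟫ ^ 2
      ≤ ∑ i ∈ T, ∑ j ∈ S, 2 * (⟪b i, x⟫ ^ 2 * ⟪z, c j⟫ ^ 2 + ⟪b i, y⟫ ^ 2 * ⟪w, c j⟫ ^ 2) := by
        refine sum_le_sum fun i _ => sum_le_sum fun j _ => ?_
        rw [inner_add_right, inner_smul_right, inner_smul_right]
        linarith [add_sq_le (a := ⟪z, c j⟫ * ⟪b i, x⟫) (b := ⟪w, c j⟫ * ⟪b i, y⟫)]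
    _ = 2 * (‖basisProj b T x‖ ^ 2 * ∑ j ∈ S, ⟪z, c j⟫ ^ 2 +
          ‖basisProj b T y‖ ^ 2 * ∑ j ∈ S, ⟪w, c j⟫ ^ 2) := by
        simp only [norm_basisProj_sq, ← mul_sum, sum_add_distrib, ← sum_mul]
    _ ≤ _ := by gcongr <;> exact hbessel _

end SpectralProjection

section SignalPlusNoise

open scoped RealInnerProductSpace
open Module (finrank)

variable {ι H : Type*} [Fintype ι] [NormedAddCommGroup H] [InnerProductSpace ℝ H]
  {G E : H →L[ℝ] H} {K : Submodule ℝ H} {L B : ℝ}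

/-- `G` is symmetric, vanishes on `Kᗮ`, and its quadratic form is at least `L` on the unit sphere
of `K`. The mean matrix of a block model has this form, `K` being the space of vectors that are
constant on every cluster. -/
structure IsSignal (G : H →L[ℝ] H) (K : Submodule ℝ H) (L : ℝ) : Prop where
  isSymmetric : (G : H →ₗ[ℝ] H).IsSymmetric
  apply_eq_zero : ∀ x ∈ Kᗮ, G x = 0
  mul_norm_sq_le_inner : ∀ x ∈ K, L * ‖x‖ ^ 2 ≤ ⟪x, G x⟫

lemma abs_inner_apply_le (hE : ‖E‖ ≤ B) (x y : H) : |⟪x, E y⟫| ≤ ‖x‖ * (B * ‖y‖) :=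
  (abs_real_inner_le_norm _ _).trans (by gcongr; exact E.le_of_opNorm_le hE y)

lemma sum_norm_starProjection_sq [K.HasOrthogonalProjection] (b : OrthonormalBasis ι ℝ H) :
    ∑ i, ‖K.starProjection (b i)‖ ^ 2 = finrank ℝ K := by
  have : FiniteDimensional ℝ H := Module.Finite.of_basis b.toBasis
  have hproj : LinearMap.IsProj K (K.starProjection : H →ₗ[ℝ] H) :=
    ⟨K.starProjection_apply_mem, fun x hx => K.starProjection_eq_self_iff.2 hx⟩
  rw [← hproj.trace, LinearMap.trace_eq_sum_inner _ b]
  refine sum_congr rfl fun i _ => ?_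
  rw [real_inner_comm]
  exact (K.re_inner_starProjection_eq_normSq (b i)).symm

namespace IsSignal

variable [K.HasOrthogonalProjection]

lemma apply_starProjection (hG : IsSignal G K L) (x : H) : G (K.starProjection x) = G x := by
  rw [← sub_eq_zero, ← map_sub, ← neg_sub, map_neg,
    hG.apply_eq_zero _ (K.sub_starProjection_mem_orthogonal x), neg_zero]

lemma mul_norm_starProjection_orthogonal_le (hG : IsSignal G K L) (hE : ‖E‖ ≤ B) {w : H}
    (hw : ‖w‖ = 1) {μ : ℝ} (hμ : (G + E) w = μ • w) :
    μ * ‖Kᗮ.starProjection w‖ ≤ B := by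
  set y := Kᗮ.starProjection w
  have hB : 0 ≤ B := (norm_nonneg E).trans hE
  have hyy : ⟪y, w⟫ = ‖y‖ ^ 2 := Kᗮ.re_inner_starProjection_eq_normSq w
  have hyG : ⟪y, G w⟫ = 0 := by
    rw [← hG.isSymmetric.apply_clm, hG.apply_eq_zero y (Kᗮ.starProjection_apply_mem w),
      inner_zero_left]
  have hquad : μ * ‖y‖ ^ 2 = ⟪y, E w⟫ := by
    rw [← hyy, ← inner_smul_right, ← hμ, _root_.add_apply, inner_add_right, hyG, zero_add]
  have hle : ⟪y, E w⟫ ≤ ‖y‖ * B := by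
    simpa [hw] using (le_abs_self _).trans (abs_inner_apply_le hE y w)
  rcases (norm_nonneg y).eq_or_lt with hy | hy
  · rwa [← hy, mul_zero]
  · exact le_of_mul_le_mul_left (by linarith) hy

lemma sub_mul_norm_starProjection_le (hG : IsSignal G K L) (hE : ‖E‖ ≤ B) {w : H}
    (hw : ‖w‖ = 1) {μ : ℝ} (hμ : (G + E) w = μ • w) :
    (L - μ) * ‖K.starProjection w‖ ≤ B := by
  set y := K.starProjection w
  have hB : 0 ≤ B := (norm_nonneg E).trans hE
  have hyy : ⟪y, w⟫ = ‖y‖ ^ 2 := K.re_inner_starProjection_eq_normSq w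
  have hyG := hG.mul_norm_sq_le_inner y (K.starProjection_apply_mem w)
  rw [hG.apply_starProjection] at hyG
  have hquad : μ * ‖y‖ ^ 2 = ⟪y, G w⟫ + ⟪y, E w⟫ := by
    rw [← hyy, ← inner_smul_right, ← hμ, _root_.add_apply, inner_add_right]
  have hle : -(‖y‖ * B) ≤ ⟪y, E w⟫ := by
    simpa [hw] using neg_le_of_abs_le (abs_inner_apply_le hE y w)
  rcases (norm_nonneg y).eq_or_lt with hy | hy
  · rwa [← hy, mul_zero]
  · exact le_of_mul_le_mul_left (by linarith) hy

lemma norm_starProjection_orthogonal_le_half (hG : IsSignal G K L) (hB : 0 < B) (hE : ‖E‖ ≤ B)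
    {w : H} (hw : ‖w‖ = 1) {μ : ℝ} (hμ : (G + E) w = μ • w) (hle : 2 * B ≤ μ) :
    ‖Kᗮ.starProjection w‖ ≤ 1 / 2 := by
  have h := hG.mul_norm_starProjection_orthogonal_le hE hw hμ
  nlinarith [norm_nonneg (Kᗮ.starProjection w)]

lemma eigenvalue_lt_or_lt (hG : IsSignal G K L) (hB : 0 < B) (hE : ‖E‖ ≤ B) {w : H}
    (hw : ‖w‖ = 1) {μ : ℝ} (hμ : (G + E) w = μ • w) : μ < 2 * B ∨ L - 2 * B < μ := by
  by_contra! hmid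
  have hperp := hG.norm_starProjection_orthogonal_le_half hB hE hw hμ hmid.1
  have hpar : ‖K.starProjection w‖ ≤ 1 / 2 := by
    have h := hG.sub_mul_norm_starProjection_le hE hw hμ
    nlinarith [norm_nonneg (K.starProjection w)]
  have hpyth := K.norm_sq_eq_add_norm_sq_starProjection w
  rw [hw] at hpyth
  nlinarith [norm_nonneg (K.starProjection w), norm_nonneg (Kᗮ.starProjection w)]

lemma norm_basisProj_le_add (hG : IsSignal G K L) {lam : ι → ℝ} {b : OrthonormalBasis ι ℝ H}
    (hb : IsEigenbasis (G + E) lam b) {T : Finset ι} (hL : 0 < L) (hT : ∀ i ∈ T, L / 2 ≤ lam i)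
    (x : H) :
    ‖basisProj b T x‖ ≤ ‖K.starProjection x‖ +
      2 / L * ‖basisProj b T (E (x - K.starProjection x))‖ := by
  set y := K.starProjection x
  have hGE : (G + E) (x - y) = E (x - y) := by
    rw [_root_.add_apply, hG.apply_eq_zero _ (K.sub_starProjection_mem_orthogonal x), zero_add]
  have hperp : ‖basisProj b T (x - y)‖ ≤ 2 / L * ‖basisProj b T (E (x - y))‖ := by
    have h := hb.mul_norm_basisProj_le (by positivity) hT (x - y)
    rw [hGE] at h
    rw [div_mul_eq_mul_div, le_div_iff₀ hL]
    linarith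
  calc ‖basisProj b T x‖ = ‖basisProj b T y + basisProj b T (x - y)‖ := by
        rw [← map_add, add_sub_cancel]
    _ ≤ ‖y‖ + 2 / L * ‖basisProj b T (E (x - y))‖ :=
        (norm_add_le _ _).trans (add_le_add (norm_basisProj_le y) hperp)

lemma norm_basisProj_le_add_div (hG : IsSignal G K L) {lam : ι → ℝ} {b : OrthonormalBasis ι ℝ H}
    (hb : IsEigenbasis (G + E) lam b) {T : Finset ι} (hL : 0 < L) (hT : ∀ i ∈ T, L / 2 ≤ lam i)
    (hE : ‖E‖ ≤ B) {x : H} (hx : ‖x‖ = 1) :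
    ‖basisProj b T x‖ ≤ ‖K.starProjection x‖ + 2 * (B / L) := by
  have hB : 0 ≤ B := (norm_nonneg E).trans hE
  have hperp : ‖x - K.starProjection x‖ ≤ 1 := by
    rw [← hx, ← K.starProjection_orthogonal_val]
    exact Kᗮ.norm_starProjection_apply_le x
  have h : ‖basisProj b T (E (x - K.starProjection x))‖ ≤ B :=
    (norm_basisProj_le _).trans <| (E.le_of_opNorm_le hE _).trans <| mul_le_of_le_one_right hB hperp
  calc _ ≤ _ := hG.norm_basisProj_le_add hb hL hT x
    _ ≤ ‖K.starProjection x‖ + 2 / L * B := by gcongr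
    _ = _ := by ring

lemma card_le (hG : IsSignal G K L) (hB : 0 < B) (hE : ‖E‖ ≤ B) {lam : ι → ℝ}
    {b : OrthonormalBasis ι ℝ H} (hb : IsEigenbasis (G + E) lam b) {T : Finset ι}
    (hT : ∀ i ∈ T, 2 * B ≤ lam i) : (#T : ℝ) ≤ 2 * finrank ℝ K := by
  have htrace := sum_norm_starProjection_sq (K := K) b
  have hhalf : ∀ i ∈ T, (1 / 2 : ℝ) ≤ ‖K.starProjection (b i)‖ ^ 2 := fun i hi => by
    have hperp := hG.norm_starProjection_orthogonal_le_half hB hE (b.norm_eq_one i) (hb i) (hT i hi)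
    have hpyth := K.norm_sq_eq_add_norm_sq_starProjection (b i)
    rw [b.norm_eq_one] at hpyth
    nlinarith [norm_nonneg (Kᗮ.starProjection (b i))]
  have hsum := card_nsmul_le_sum T _ _ hhalf
  have hsub := sum_le_sum_of_subset_of_nonneg (subset_univ T)
    fun i _ _ => sq_nonneg ‖K.starProjection (b i)‖
  rw [nsmul_eq_mul] at hsum
  linarith

end IsSignal

-- `K` has dimension greater than `i`, so it contains a vector orthogonal to the first `i`
-- eigenvectors.
lemma exists_mem_ne_zero_forall_inner_eq_zero {n : ℕ} (b : OrthonormalBasis (Fin n) ℝ H) {i : Fin n}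
    (hi : (i : ℕ) < finrank ℝ K) : ∃ x ∈ K, x ≠ 0 ∧ ∀ j < i, ⟪b j, x⟫ = 0 := by
  have : FiniteDimensional ℝ H := Module.Finite.of_basis b.toBasis
  let f : K →ₗ[ℝ] (Fin i → ℝ) :=
    LinearMap.pi fun j => (innerₗ H (b (j.castLE i.is_lt.le))).comp K.subtype
  obtain ⟨x, hx, hx0⟩ := Submodule.exists_mem_ne_zero_of_ne_bot
    (LinearMap.ker_ne_bot_of_finrank_lt (f := f) (by simpa using hi))
  exact ⟨x, x.2, by simpa using hx0, fun j hj => congr_fun hx ⟨j, hj⟩⟩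

lemma IsSignal.sub_le_eigenvalue (hG : IsSignal G K L) (hE : ‖E‖ ≤ B) {n : ℕ} {lam : Fin n → ℝ}
    (hlam : Antitone lam) {b : OrthonormalBasis (Fin n) ℝ H} (hb : IsEigenbasis (G + E) lam b)
    {i : Fin n} (hi : (i : ℕ) < finrank ℝ K) : L - B ≤ lam i := by
  obtain ⟨x, hxK, hx0, hx⟩ := exists_mem_ne_zero_forall_inner_eq_zero b hi
  have hupper : ⟪x, (G + E) x⟫ ≤ lam i * ‖x‖ ^ 2 := by
    rw [← b.sum_inner_mul_inner, ← b.sum_sq_norm_inner_right, mul_sum]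
    refine sum_le_sum fun j _ => ?_
    rw [hb.inner_apply, real_inner_comm, Real.norm_eq_abs, sq_abs]
    rcases lt_or_ge j i with hj | hj
    · simp [hx j hj]
    · nlinarith [hlam hj, sq_nonneg ⟪b j, x⟫]
  have hlower : (L - B) * ‖x‖ ^ 2 ≤ ⟪x, (G + E) x⟫ := by
    rw [_root_.add_apply, inner_add_right]
    linarith [hG.mul_norm_sq_le_inner x hxK, neg_le_of_abs_le (abs_inner_apply_le hE x x)]
  exact le_of_mul_le_mul_right (hlower.trans hupper) (by positivity)

end SignalPlusNoise

section LeaveOneOut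

open scoped RealInnerProductSpace

variable {ι κ H : Type*} [Fintype ι] [Fintype κ] [NormedAddCommGroup H] [InnerProductSpace ℝ H]
  {G E : H →L[ℝ] H} {K : Submodule ℝ H} {L B : ℝ} {e : H}

/-- The compression of `E` to the orthogonal complement of `e`. For the `u`-th basis vector `e`,
this replaces the `u`-th row and column of the matrix of `E` by zeros, leaving an operator
independent of `E e`. -/
noncomputable def leaveOneOut (e : H) (E : H →L[ℝ] H) : H →L[ℝ] H :=
  (ℝ ∙ e)ᗮ.starProjection ∘L E ∘L (ℝ ∙ e)ᗮ.starProjection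

lemma isSymmetric_leaveOneOut (hE : (E : H →ₗ[ℝ] H).IsSymmetric) :
    (leaveOneOut e E : H →ₗ[ℝ] H).IsSymmetric := fun x y => by
  have h := (ℝ ∙ e)ᗮ.starProjection_isSymmetric
  exact (h.apply_clm _ _).trans ((hE.apply_clm _ _).trans (h.apply_clm _ _))

lemma norm_leaveOneOut_le : ‖leaveOneOut e E‖ ≤ ‖E‖ := by
  have h : ‖(ℝ ∙ e)ᗮ.starProjection‖ ≤ 1 := Submodule.starProjection_norm_le _
  calc ‖leaveOneOut e E‖ ≤ ‖(ℝ ∙ e)ᗮ.starProjection‖ * (‖E‖ * ‖(ℝ ∙ e)ᗮ.starProjection‖) :=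
        (ContinuousLinearMap.opNorm_comp_le _ _).trans <|
          mul_le_mul_of_nonneg_left (ContinuousLinearMap.opNorm_comp_le _ _) (norm_nonneg _)
    _ ≤ 1 * (‖E‖ * 1) := by gcongr
    _ = ‖E‖ := by ring

lemma starProjection_orthogonal_singleton (he : ‖e‖ = 1) (x : H) :
    (ℝ ∙ e)ᗮ.starProjection x = x - ⟪e, x⟫ • e := by
  rw [Submodule.starProjection_orthogonal_val, Submodule.starProjection_unit_singleton ℝ he]

lemma sub_leaveOneOut_apply (he : ‖e‖ = 1) (hE : (E : H →ₗ[ℝ] H).IsSymmetric) (x : H) :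
    (E - leaveOneOut e E) x =
      ⟪(ℝ ∙ e)ᗮ.starProjection (E e), x⟫ • e + ⟪e, x⟫ • E e := by
  set R := (ℝ ∙ e)ᗮ.starProjection
  have hinner : ⟪R (E e), x⟫ = ⟪e, E (R x)⟫ := by
    rw [Submodule.inner_starProjection_left_eq_right, hE.apply_clm]
  have hER : E (R x) = E x - ⟪e, x⟫ • E e := by
    rw [starProjection_orthogonal_singleton he, map_sub, map_smul]
  rw [hinner, _root_.sub_apply, leaveOneOut, ContinuousLinearMap.comp_apply,
    ContinuousLinearMap.comp_apply, starProjection_orthogonal_singleton he (E _), hER]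
  abel

variable {lam : ι → ℝ} {μ : κ → ℝ} {b : OrthonormalBasis ι ℝ H} {c : OrthonormalBasis κ ℝ H}
  {T : Finset ι} {S : Finset κ}

lemma sum_inner_sq_le_of_leaveOneOut (hE : ‖E‖ ≤ B) (hsymm : (E : H →ₗ[ℝ] H).IsSymmetric)
    (he : ‖e‖ = 1) (hb : IsEigenbasis (G + E) lam b) (hc : IsEigenbasis (G + leaveOneOut e E) μ c)
    (hL : 0 < L) (hgap : ∀ i ∈ T, ∀ j ∈ S, L / 2 ≤ lam i - μ j) :
    ∑ i ∈ T, ∑ j ∈ S, ⟪b i, c j⟫ ^ 2 ≤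
      8 / L ^ 2 * (‖basisProj b T (E e)‖ ^ 2 + (‖basisProj b T e‖ * B) ^ 2) := by
  have hR : ‖(ℝ ∙ e)ᗮ.starProjection (E e)‖ ≤ B :=
    (Submodule.norm_starProjection_apply_le _ _).trans <| by
      simpa [he] using E.le_of_opNorm_le hE e
  have hDK := hb.sq_mul_sum_inner_sq_le hc (by positivity) hgap
  simp only [add_sub_add_left_eq_sub, sub_leaveOneOut_apply he hsymm] at hDK
  have hrank := hDK.trans (sum_inner_rankTwo_sq_le _ _ _ _)
  have hsq : ‖basisProj b T e‖ ^ 2 * ‖(ℝ ∙ e)ᗮ.starProjection (E e)‖ ^ 2 ≤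
      (‖basisProj b T e‖ * B) ^ 2 := by
    rw [mul_pow]
    gcongr
  rw [he] at hrank
  rw [div_mul_eq_mul_div, le_div_iff₀ (by positivity)]
  linarith

lemma norm_basisProj_sub_le [K.HasOrthogonalProjection] (hG : IsSignal G K L)
    (hB : 0 < B) (hE : ‖E‖ ≤ B) (hBL : 100 * B ≤ L)
    (hsymm : (E : H →ₗ[ℝ] H).IsSymmetric) (he : ‖e‖ = 1)
    (hb : IsEigenbasis (G + E) lam b) (hc : IsEigenbasis (G + leaveOneOut e E) μ c)
    (hT : ∀ i ∈ T, L - B ≤ lam i) (hS : ∀ j, L / 2 ≤ μ j → j ∈ S) :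
    ‖basisProj b T (E e - basisProj c S (E e))‖ ≤
      3 * (B / L) * (‖basisProj b T (E e)‖ + ‖basisProj b T e‖ * B) := by
  classical
  have hL : 0 < L := by linarith
  have hEe : ‖E e‖ ≤ B := by simpa [he] using E.le_of_opNorm_le hE e
  have hgap : ∀ i ∈ T, ∀ j ∈ Sᶜ, L / 2 ≤ lam i - μ j := fun i hi j hj => by
    have hj : μ j < L / 2 := not_le.1 fun h => mem_compl.1 hj (hS j h)
    rcases hG.eigenvalue_lt_or_lt hB (norm_leaveOneOut_le.trans hE) (c.norm_eq_one j) (hc j)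
      with h | h <;> linarith [hT i hi]
  set β := ‖basisProj b T e‖
  set α := ‖basisProj b T (E e)‖
  refine le_of_sq_le_sq ?_ (by positivity)
  calc ‖basisProj b T (E e - basisProj c S (E e))‖ ^ 2
      ≤ 8 / L ^ 2 * (α ^ 2 + (β * B) ^ 2) * B ^ 2 := by
        refine (norm_basisProj_sub_sq_le _).trans ?_
        gcongr
        exact sum_inner_sq_le_of_leaveOneOut hE hsymm he hb hc hL hgap
    _ = 8 * (B / L) ^ 2 * (α ^ 2 + (β * B) ^ 2) := by ring
    _ ≤ 9 * (B / L) ^ 2 * (α + β * B) ^ 2 := by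
        gcongr
        · norm_num
        · nlinarith [mul_nonneg (norm_nonneg _ : 0 ≤ α) (by positivity : 0 ≤ β * B)]
    _ = _ := by ring

lemma le_two_mul_add_of_le_add_mul {α γ τ σ ε : ℝ} (hα : 0 ≤ α) (hτ : 0 ≤ τ) (hσ : 0 ≤ σ)
    (hε : 0 ≤ ε) (hε' : ε ≤ 1 / 100) (h : α ≤ τ + 3 * ε * (α + γ))
    (hγ : γ ≤ σ + 2 * ε * (α + σ)) : α ≤ 2 * τ + 4 * ε * σ := by
  have hsubst : α ≤ τ + 3 * ε * (α + (σ + 2 * ε * (α + σ))) := h.trans (by gcongr)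
  have hεα : ε * α ≤ 1 / 100 * α := by gcongr
  have hεεα : ε * (ε * α) ≤ 1 / 100 * (1 / 100 * α) := by gcongr
  have hεεσ : ε * (ε * σ) ≤ 1 / 100 * (ε * σ) := by gcongr
  linarith [mul_nonneg hε hσ]

theorem norm_basisProj_apply_le [K.HasOrthogonalProjection] (hG : IsSignal G K L)
    (hB : 0 < B) (hE : ‖E‖ ≤ B) (hBL : 100 * B ≤ L)
    (hsymm : (E : H →ₗ[ℝ] H).IsSymmetric) (he : ‖e‖ = 1)
    (hb : IsEigenbasis (G + E) lam b) (hc : IsEigenbasis (G + leaveOneOut e E) μ c)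
    (hT : ∀ i ∈ T, L - B ≤ lam i) (hS : ∀ j, L / 2 ≤ μ j → j ∈ S) :
    ‖basisProj b T (E e)‖ ≤
      2 * ‖basisProj c S (E e)‖ + 4 * (B / L) * B * ‖K.starProjection e‖ := by
  have hL : 0 < L := by linarith
  set α := ‖basisProj b T (E e)‖
  set β := ‖basisProj b T e‖
  set τ := ‖basisProj c S (E e)‖
  set σ := ‖K.starProjection e‖
  set ε := B / L with hε
  have hmain : α ≤ τ + 3 * ε * (α + β * B) := by
    calc α = ‖basisProj b T (basisProj c S (E e)) +
            basisProj b T (E e - basisProj c S (E e))‖ := by rw [← map_add, add_sub_cancel]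
      _ ≤ _ := (norm_add_le _ _).trans <| add_le_add (norm_basisProj_le _) <|
        norm_basisProj_sub_le hG hB hE hBL hsymm he hb hc hT hS
  have hproj : ‖basisProj b T (E (e - K.starProjection e))‖ ≤ α + B * σ := by
    rw [map_sub, map_sub]
    refine (norm_sub_le _ _).trans (add_le_add_right ((norm_basisProj_le _).trans ?_) _)
    exact E.le_of_opNorm_le hE _
  have hincoh : β * B ≤ B * σ + 2 * ε * (α + B * σ) := by
    have h := hG.norm_basisProj_le_add hb hL (fun i hi => by linarith [hT i hi]) e
    calc β * B ≤ (σ + 2 / L * (α + B * σ)) * B := by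
          gcongr
          exact h.trans (by gcongr)
      _ = _ := by rw [hε]; ring
  have hbound := le_two_mul_add_of_le_add_mul (norm_nonneg _ : 0 ≤ α) (norm_nonneg _ : 0 ≤ τ)
    (by positivity : 0 ≤ B * σ) (by positivity : 0 ≤ ε)
    (by rw [hε, div_le_iff₀ hL]; linarith) hmain hincoh
  linarith

end LeaveOneOut

section LeaveOneOutNoise

variable {V : Type*} [Fintype V] [DecidableEq V]

lemma leaveOneOut_toEuclideanCLM (M : Matrix V V ℝ) (u : V) :
    leaveOneOut (EuclideanSpace.single u 1) (toEuclideanCLM (𝕜 := ℝ) M) =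
      toEuclideanCLM (𝕜 := ℝ) (of fun a b => if a = u ∨ b = u then 0 else M a b) := by
  ext x a
  simp only [leaveOneOut, ContinuousLinearMap.comp_apply,
    starProjection_orthogonal_singleton (e := EuclideanSpace.single u (1 : ℝ)) (by simp),
    PiLp.sub_apply, PiLp.smul_apply, ofLp_toEuclideanCLM, mulVec, dotProduct, of_apply,
    EuclideanSpace.inner_single_left, PiLp.single_apply]
  by_cases ha : a = u
  · simp [ha]
  · simp [ha, mul_sub, sum_ite, filter_ne', sum_erase_eq_sub]

/-- The operator of the matrix `noiseMatrix g x`. -/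
noncomputable def noiseOp (g : Sym2 V → unitInterval) (x : Sym2 V → Bool) :
    EuclideanSpace ℝ V →L[ℝ] EuclideanSpace ℝ V :=
  toEuclideanCLM (𝕜 := ℝ) (noiseMatrix g x)

variable {g : Sym2 V → unitInterval}

lemma isSymmetric_noiseOp (x : Sym2 V → Bool) :
    (noiseOp g x : EuclideanSpace ℝ V →ₗ[ℝ] EuclideanSpace ℝ V).IsSymmetric :=
  isSymmetric_toEuclideanLin_iff.2 (isHermitian_noiseMatrix x)

lemma noiseOp_single (x : Sym2 V → Bool) (u : V) :
    noiseOp g x (EuclideanSpace.single u 1) =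
      ∑ v, centered (g s(u, v)) (x s(u, v)) • EuclideanSpace.single v (1 : ℝ) := by
  ext v
  simp [noiseOp, noiseMatrix, Sym2.eq_swap (a := v), Pi.single_apply]

lemma leaveOneOut_noiseOp_update (u v : V) (x : Sym2 V → Bool) (t : Bool) :
    leaveOneOut (EuclideanSpace.single u 1) (noiseOp g (Function.update x s(u, v) t)) =
      leaveOneOut (EuclideanSpace.single u 1) (noiseOp g x) := by
  simp only [noiseOp, leaveOneOut_toEuclideanCLM]
  congr 2
  ext a b
  refine ite_congr rfl (fun _ => rfl) fun h => ?_
  have hne : s(a, b) ≠ s(u, v) := fun h' => h (by grind)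
  simp [noiseMatrix, hne]

end LeaveOneOutNoise

section EigenvalueThreshold

open Module

variable {H : Type*} [NormedAddCommGroup H] [InnerProductSpace ℝ H] [FiniteDimensional ℝ H]
  {A : H →L[ℝ] H}

/-- The indices of the eigenvalues of the symmetric operator `A` that are at least `t`. -/
noncomputable def eigenvaluesGE (hA : (A : H →ₗ[ℝ] H).IsSymmetric) (t : ℝ) :
    Finset (Fin (finrank ℝ H)) :=
  {i | t ≤ hA.eigenvalues rfl i}

/-- The spectral projection of the symmetric operator `A` for the eigenvalues that are at least
`t`. -/
noncomputable def spectralProj (hA : (A : H →ₗ[ℝ] H).IsSymmetric) (t : ℝ) : H →L[ℝ] H :=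
  basisProj (hA.eigenvectorBasis rfl) (eigenvaluesGE hA t)

lemma isEigenbasis_eigenvectorBasis (hA : (A : H →ₗ[ℝ] H).IsSymmetric) :
    IsEigenbasis A (hA.eigenvalues rfl) (hA.eigenvectorBasis rfl) :=
  hA.apply_eigenvectorBasis rfl

end EigenvalueThreshold

section LeaveOneOutConcentration

open scoped RealInnerProductSpace
open Module

variable {V : Type*} [Fintype V] [DecidableEq V] {g : Sym2 V → unitInterval}
  {G : EuclideanSpace ℝ V →L[ℝ] EuclideanSpace ℝ V} {K : Submodule ℝ (EuclideanSpace ℝ V)}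
  {L B p s l : ℝ}

lemma IsSignal.isSymmetric_add_leaveOneOut (hG : IsSignal G K L) (u : V) (x : Sym2 V → Bool) :
    ((G + leaveOneOut (EuclideanSpace.single u 1) (noiseOp g x) :
      EuclideanSpace ℝ V →L[ℝ] EuclideanSpace ℝ V) :
      EuclideanSpace ℝ V →ₗ[ℝ] EuclideanSpace ℝ V).IsSymmetric :=
  hG.isSymmetric.add (isSymmetric_leaveOneOut (isSymmetric_noiseOp x))

open Classical in
/-- The projection of the `v`-th basis vector onto the large eigenspaces of the leave-one-out
perturbation of `G` at `u`, cut off where the noise is not bounded by `B`. It does not depend on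
the noise at the pairs containing `u`. -/
noncomputable def leaveOneOutVector (g : Sym2 V → unitInterval) (hG : IsSignal G K L) (B : ℝ)
    (u v : V) (x : Sym2 V → Bool) : EuclideanSpace ℝ V :=
  if ‖leaveOneOut (EuclideanSpace.single u 1) (noiseOp g x)‖ ≤ B then
    spectralProj (hG.isSymmetric_add_leaveOneOut (g := g) u x) (L / 2) (EuclideanSpace.single v 1)
  else 0

lemma leaveOneOutVector_update (hG : IsSignal G K L) (u v w : V) (x : Sym2 V → Bool) (t : Bool) :
    leaveOneOutVector g hG B u v (Function.update x s(u, w) t) =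
      leaveOneOutVector g hG B u v x := by
  simp only [leaveOneOutVector, leaveOneOut_noiseOp_update]

lemma norm_leaveOneOutVector_le (hG : IsSignal G K L) (hL : 0 < L) (hB : 0 ≤ B)
    (hs : ∀ v, ‖K.starProjection (EuclideanSpace.single v 1)‖ ≤ s) (u v : V) (x : Sym2 V → Bool) :
    ‖leaveOneOutVector g hG B u v x‖ ≤ s + 2 * (B / L) := by
  rw [leaveOneOutVector]
  split_ifs with hE
  · refine (hG.norm_basisProj_le_add_div (isEigenbasis_eigenvectorBasis _) hL
      (fun i hi => (mem_filter.1 hi).2) hE (by simp)).trans ?_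
    gcongr
    exact hs v
  · rw [norm_zero]
    have := (norm_nonneg _).trans (hs v)
    positivity

lemma sum_norm_sq_leaveOneOutVector_le (hG : IsSignal G K L) (hB : 0 < B) (hBL : 4 * B ≤ L)
    (u : V) (x : Sym2 V → Bool) :
    ∑ v, ‖leaveOneOutVector g hG B u v x‖ ^ 2 ≤ 2 * finrank ℝ K := by
  simp only [leaveOneOutVector]
  split_ifs with hE
  · have hA := hG.isSymmetric_add_leaveOneOut (g := g) u x
    have hsum := sum_norm_basisProj_sq (b := hA.eigenvectorBasis rfl)
      (T := eigenvaluesGE hA (L / 2)) (c := EuclideanSpace.basisFun V ℝ)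
    simp only [EuclideanSpace.basisFun_apply] at hsum
    refine hsum.trans_le (hG.card_le hB hE (isEigenbasis_eigenvectorBasis hA) fun i hi => ?_)
    linarith [(mem_filter.1 hi).2]
  · simp

lemma sum_centered_smul_leaveOneOutVector (hG : IsSignal G K L) (u : V) {x : Sym2 V → Bool}
    (hx : ‖noiseOp g x‖ ≤ B) :
    ∑ v, centered (g s(u, v)) (x s(u, v)) • leaveOneOutVector g hG B u v x =
      spectralProj (hG.isSymmetric_add_leaveOneOut (g := g) u x) (L / 2)
        (noiseOp g x (EuclideanSpace.single u 1)) := by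
  simp only [leaveOneOutVector, if_pos (norm_leaveOneOut_le.trans hx)]
  rw [noiseOp_single, map_sum]
  simp only [map_smul]

lemma prob_norm_spectralProj_gt_le (hG : IsSignal G K L) (hg : ∀ e, g e ≤ p) (hB : 0 < B)
    (hBL : 4 * B ≤ L) (hs : ∀ v, ‖K.starProjection (EuclideanSpace.single v 1)‖ ≤ s)
    (hl : 0 < l) (hls : l * (s + 2 * (B / L)) ≤ 1 / 2) (r : ℝ) (u : V) :
    prob g {x | ‖noiseOp g x‖ ≤ B ∧
        r < ‖spectralProj (hG.isSymmetric_add_leaveOneOut (g := g) u x) (L / 2)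
          (noiseOp g x (EuclideanSpace.single u 1))‖} ≤
      Real.exp (1 + 6 * l ^ 2 * p * finrank ℝ K - l * r) := by
  have hp : 0 ≤ p := (g s(u, u)).2.1.trans (hg _)
  have hmgf := expect_exp_norm_sum_le (g := g) (e := fun v => s(u, v))
    (y := fun v x => l • leaveOneOutVector g hG B u v x) (K := 2 * l ^ 2 * p * finrank ℝ K)
    (fun _ _ => Sym2.congr_right.1)
    (fun v w x t => by rw [leaveOneOutVector_update])
    (fun v x => by
      rw [norm_smul, Real.norm_of_nonneg hl.le]
      refine le_trans ?_ hls
      gcongr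
      exact norm_leaveOneOutVector_le hG (by linarith) hB.le hs u v x)
    (fun x => by
      calc ∑ v, g s(u, v) * ‖l • leaveOneOutVector g hG B u v x‖ ^ 2
          ≤ ∑ v, p * ‖l • leaveOneOutVector g hG B u v x‖ ^ 2 := by
            gcongr
            exact hg _
        _ = p * l ^ 2 * ∑ v, ‖leaveOneOutVector g hG B u v x‖ ^ 2 := by
            simp only [norm_smul, Real.norm_eq_abs, mul_pow, sq_abs, mul_sum, mul_assoc]
        _ ≤ p * l ^ 2 * (2 * finrank ℝ K) := by
            gcongr
            exact sum_norm_sq_leaveOneOutVector_le hG hB hBL u x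
        _ = _ := by ring)
  refine (prob_mono ?_).trans ((prob_lt_le_exp_neg_mul _ (l * r)).trans
    ((mul_le_mul_of_nonneg_left hmgf (Real.exp_pos _).le).trans_eq ?_))
  · rintro x ⟨hx, hr⟩
    simp only [smul_comm _ l, ← smul_sum, sum_centered_smul_leaveOneOutVector hG u hx, norm_smul,
      Real.norm_of_nonneg hl.le, Set.mem_ofPred_eq]
    gcongr
  · rw [← Real.exp_add]
    ring_nf

/-- In every spectral decomposition of `G + E`, the projection of each column of `E` onto the span
of the top `m` eigenvectors has norm at most `R`. -/
def TopProjBound {n : ℕ} (G E : EuclideanSpace ℝ (Fin n) →L[ℝ] EuclideanSpace ℝ (Fin n)) (m : ℕ)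
    (R : ℝ) : Prop :=
  ∀ (lam : Fin n → ℝ) (b : OrthonormalBasis (Fin n) ℝ (EuclideanSpace ℝ (Fin n))),
    Antitone lam → IsEigenbasis (G + E) lam b →
    ∀ u, ‖basisProj b {i | (i : ℕ) < m} (E (EuclideanSpace.single u 1))‖ ≤ R

variable {n : ℕ} {g : Sym2 (Fin n) → unitInterval}
  {G : EuclideanSpace ℝ (Fin n) →L[ℝ] EuclideanSpace ℝ (Fin n)}
  {K : Submodule ℝ (EuclideanSpace ℝ (Fin n))}

lemma IsSignal.topProjBound (hG : IsSignal G K L) (hB : 0 < B) (hBL : 100 * B ≤ L)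
    (hs : ∀ v, ‖K.starProjection (EuclideanSpace.single v 1)‖ ≤ s) {r : ℝ}
    {x : Sym2 (Fin n) → Bool} (hx : ‖noiseOp g x‖ ≤ B)
    (hr : ∀ u, ‖spectralProj (hG.isSymmetric_add_leaveOneOut (g := g) u x) (L / 2)
      (noiseOp g x (EuclideanSpace.single u 1))‖ ≤ r) :
    TopProjBound G (noiseOp g x) (finrank ℝ K) (2 * r + 4 * (B / L) * B * s) := by
  intro lam b hlam hb u
  have hA := hG.isSymmetric_add_leaveOneOut (g := g) u x
  have hL : 0 < L := by linarith
  calc _ ≤ 2 * ‖spectralProj hA (L / 2) (noiseOp g x (EuclideanSpace.single u 1))‖ +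
        4 * (B / L) * B * ‖K.starProjection (EuclideanSpace.single u 1)‖ :=
      norm_basisProj_apply_le hG hB hx hBL (isSymmetric_noiseOp x) (by simp) hb
        (isEigenbasis_eigenvectorBasis hA)
        (fun i hi => hG.sub_le_eigenvalue hx hlam hb (mem_filter.1 hi).2)
        (fun j hj => mem_filter.2 ⟨mem_univ j, hj⟩)
    _ ≤ _ := by
      gcongr
      exacts [hr u, hs u]

theorem prob_not_topProjBound_le (hG : IsSignal G K L) (hg : ∀ e, g e ≤ p)
    (hlog : 1 ≤ Real.log n) (hp : 5 * Real.log n ^ 2 ≤ n * p)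
    (hB : B = √(600 * (n * p) * Real.log n)) (hBL : 100 * B ≤ L)
    (hs : ∀ v, ‖K.starProjection (EuclideanSpace.single v 1)‖ ≤ s)
    (hl : 0 < l) (hls : l * (s + 2 * (B / L)) ≤ 1 / 2) (r : ℝ) :
    prob g {x | ¬ TopProjBound G (noiseOp g x) (finrank ℝ K) (2 * r + 4 * (B / L) * B * s)} ≤
      1 / n ^ 2 + n * Real.exp (1 + 6 * l ^ 2 * p * finrank ℝ K - l * r) := by
  have hnp : 0 < n * p := lt_of_lt_of_le (by positivity) hp
  have hB' : 0 < B := hB ▸ Real.sqrt_pos.2 (by positivity)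
  have hnorm : prob g {x | B < ‖noiseOp g x‖} ≤ 1 / n ^ 2 := by
    have h := prob_norm_noiseMatrix_gt_le hg (by simpa using hlog) (by simpa using hp)
    rwa [Fintype.card_fin, ← hB] at h
  have hproj := sum_le_sum fun u (_ : u ∈ univ) =>
    prob_norm_spectralProj_gt_le hG hg hB' (by linarith) hs hl hls r u
  rw [sum_const, card_univ, Fintype.card_fin, nsmul_eq_mul] at hproj
  refine (prob_mono fun x hx => ?_).trans ((prob_union_le _ _).trans
    (add_le_add hnorm ((prob_iUnion_le _).trans hproj)))
  by_contra hgood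
  simp only [Set.mem_union, Set.mem_iUnion, Set.mem_ofPred_eq, not_or, not_exists, not_and,
    not_lt] at hgood
  exact hx (hG.topProjBound hB' hBL hs hgood.1 fun u => hgood.2 u hgood.1)

end LeaveOneOutConcentration

section BlockModel

open scoped RealInnerProductSpace
open Module

variable {n k : ℕ} {cl : Fin n → Fin k} {p q m : ℝ}

/-- The space of vectors that are constant on every cluster. -/
noncomputable def blockSpace (cl : Fin n → Fin k) : Submodule ℝ (EuclideanSpace ℝ (Fin n)) :=
  LinearMap.range
    ((WithLp.linearEquiv 2 ℝ (Fin n → ℝ)).symm.toLinearMap ∘ₗ LinearMap.funLeft ℝ ℝ cl)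

lemma mem_blockSpace {x : EuclideanSpace ℝ (Fin n)} :
    x ∈ blockSpace cl ↔ ∃ f : Fin k → ℝ, ∀ u, x u = f (cl u) := by
  refine exists_congr fun f => ⟨?_, fun h => ?_⟩
  · rintro rfl u
    rfl
  · ext u
    exact (h u).symm

lemma finrank_blockSpace (hcl : Function.Surjective cl) : finrank ℝ (blockSpace cl) = k := by
  rw [blockSpace, LinearMap.finrank_range_of_inj, finrank_fin_fun]
  exact (WithLp.linearEquiv 2 ℝ (Fin n → ℝ)).symm.injective.comp
    (LinearMap.funLeft_injective_of_surjective ℝ ℝ cl hcl)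

lemma sum_ite_eq_clusterSize_mul (i : Fin k) (a : ℝ) :
    ∑ v, (if i = cl v then a else 0) = clusterSize cl i * a := by
  simp [sum_ite, clusterSize, eq_comm]

lemma inner_meanMatrix_of_mem_blockSpace {x : EuclideanSpace ℝ (Fin n)} (hx : x ∈ blockSpace cl) :
    ⟪x, toEuclideanCLM (𝕜 := ℝ) (meanMatrix n k p q cl) x⟫ =
      q * (∑ u, x u) ^ 2 + (p - q) * ∑ u, clusterSize cl (cl u) * x u ^ 2 := by
  obtain ⟨f, hf⟩ := mem_blockSpace.1 hx
  have hentry : ∀ u v, x u * (meanMatrix n k p q cl u v * x v) =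
      q * (x u * x v) + (p - q) * if cl u = cl v then x u ^ 2 else 0 := fun u v => by
    simp only [meanMatrix, of_apply]
    split_ifs with h
    · rw [hf u, hf v, h]
      ring
    · ring
  simp only [inner_toEuclideanCLM, dotProduct, mulVec, mul_sum, hentry, sum_add_distrib]
  simp only [← mul_sum, sum_ite_eq_clusterSize_mul, ← sum_mul, sq]

theorem isSignal_meanMatrix (hq : 0 ≤ q) (hpq : q ≤ p) (hm : ∀ i, m ≤ clusterSize cl i) :
    IsSignal (toEuclideanCLM (𝕜 := ℝ) (meanMatrix n k p q cl)) (blockSpace cl) ((p - q) * m) where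
  isSymmetric := isSymmetric_toEuclideanLin_iff.2 <| by
    ext u v
    simp [meanMatrix, eq_comm]
  apply_eq_zero x hx := by
    ext u
    have hrow : WithLp.toLp 2 (meanMatrix n k p q cl u) ∈ blockSpace cl :=
      mem_blockSpace.2 ⟨fun i => if cl u = i then p else q, fun v => rfl⟩
    simpa [ofLp_toEuclideanCLM, mulVec, dotProduct, PiLp.inner_apply, mul_comm] using
      Submodule.inner_right_of_mem_orthogonal hrow hx
  mul_norm_sq_le_inner x hx := by
    rw [inner_meanMatrix_of_mem_blockSpace hx, EuclideanSpace.real_norm_sq_eq, mul_assoc, mul_sum]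
    refine le_add_of_nonneg_of_le (by positivity) ?_
    have := sub_nonneg.2 hpq
    gcongr
    exact hm _

lemma clusterSize_mul_sq_le_norm_sq {x : EuclideanSpace ℝ (Fin n)} (hx : x ∈ blockSpace cl)
    (u : Fin n) : clusterSize cl (cl u) * x u ^ 2 ≤ ‖x‖ ^ 2 := by
  obtain ⟨f, hf⟩ := mem_blockSpace.1 hx
  rw [EuclideanSpace.real_norm_sq_eq, ← sum_ite_eq_clusterSize_mul]
  refine sum_le_sum fun v _ => ?_
  split_ifs with h
  · rw [hf u, hf v, h]
  · positivity

lemma norm_starProjection_blockSpace_le (hm0 : 0 < m) (hm : ∀ i, m ≤ clusterSize cl i)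
    (u : Fin n) : ‖(blockSpace cl).starProjection (EuclideanSpace.single u 1)‖ ≤ √(1 / m) := by
  set w := (blockSpace cl).starProjection (EuclideanSpace.single u 1)
  have hwmem : w ∈ blockSpace cl := Submodule.starProjection_apply_mem _ _
  have hcoord : w u = ‖w‖ ^ 2 := by
    have hinner : ⟪w, EuclideanSpace.single u (1 : ℝ)⟫ = ⟪w, w⟫ := by
      nth_rw 1 [← Submodule.starProjection_eq_self_iff.2 hwmem]
      rw [Submodule.inner_starProjection_left_eq_right]
    simpa [EuclideanSpace.inner_single_right] using hinner
  have hle := (mul_le_mul_of_nonneg_right (hm (cl u)) (sq_nonneg (w u))).trans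
    (clusterSize_mul_sq_le_norm_sq hwmem u)
  refine Real.le_sqrt_of_sq_le ?_
  rw [hcoord] at hle
  rw [le_div_iff₀ hm0]
  by_contra! h
  nlinarith

end BlockModel

section NoiseModel

variable {n k : ℕ}

/-- The edge probabilities of the block model: the entries of `meanMatrix`, as a function on
unordered pairs. -/
def edgeProb (p q : unitInterval) (cl : Fin n → Fin k) : Sym2 (Fin n) → unitInterval :=
  Sym2.lift ⟨fun u v => if cl u = cl v then p else q, fun u v => by simp [eq_comm]⟩

variable {p q : unitInterval} {cl : Fin n → Fin k}

lemma edgeProb_le (hpq : q ≤ p) (e : Sym2 (Fin n)) : edgeProb p q cl e ≤ p := by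
  induction e with | _ u v
  by_cases h : cl u = cl v <;> simp [edgeProb, h, hpq]

lemma coe_edgeProb (u v : Fin n) : (edgeProb p q cl s(u, v) : ℝ) = meanMatrix n k p q cl u v := by
  by_cases h : cl u = cl v <;> simp [edgeProb, meanMatrix, h]

lemma centered_injective (g : unitInterval) : Function.Injective (centered g) :=
  Bool.injective_iff.2 fun h => by
    simp only [centered, Bool.false_eq_true, if_false, if_true] at h
    linarith

lemma noiseMatrix_injective {V : Type*} (g : Sym2 V → unitInterval) :
    Function.Injective (noiseMatrix g) := by
  intro x y hxy
  ext e
  induction e with | _ u v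
  rw [centered_injective _ (congrFun₂ hxy u v)]

variable {Ω : Type*} [MeasureSpace Ω] {E : Ω → Matrix (Fin n) (Fin n) ℝ}

lemma NoiseModel.measure_preimage_singleton (hE : NoiseModel p q cl E) {u v : Fin n} (huv : u ≤ v)
    (b : Bool) : ℙ ((fun ω => E ω u v) ⁻¹' {centered (edgeProb p q cl s(u, v)) b}) =
      ENNReal.ofReal (bernoulliWeight (edgeProb p q cl s(u, v)) b) := by
  rw [← Measure.map_apply (hE.2.1 u v) (measurableSet_singleton _), hE.2.2.2 u v huv,
    ← coe_edgeProb]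
  generalize edgeProb p q cl s(u, v) = g
  cases b
  · simp [bernoulliWeight, centered, sub_eq_iff_eq_add]
  · simp [bernoulliWeight, centered, eq_sub_iff_add_eq]

lemma NoiseModel.eq_noiseMatrix_iff (hE : NoiseModel p q cl E) (x : Sym2 (Fin n) → Bool) (ω : Ω) :
    E ω = noiseMatrix (edgeProb p q cl) x ↔
      ∀ e : {e : Fin n × Fin n // e.1 ≤ e.2},
        E ω e.1.1 e.1.2 = noiseMatrix (edgeProb p q cl) x e.1.1 e.1.2 := by
  refine ⟨fun h e => by rw [h], fun h => ?_⟩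
  ext u v
  rcases le_total u v with huv | huv
  · exact h ⟨(u, v), huv⟩
  · rw [← (hE.1 ω).apply, ← (isHermitian_iff_isSymm.1 (isHermitian_noiseMatrix x)).apply]
    exact h ⟨(v, u), huv⟩

lemma NoiseModel.measure_eq_noiseMatrix (hE : NoiseModel p q cl E) (x : Sym2 (Fin n) → Bool) :
    ℙ {ω | E ω = noiseMatrix (edgeProb p q cl) x} =
      ENNReal.ofReal (productWeight (edgeProb p q cl) x) := by
  have hset : {ω | E ω = noiseMatrix (edgeProb p q cl) x} =
      ⋂ e ∈ (univ : Finset {e : Fin n × Fin n // e.1 ≤ e.2}), (fun ω => E ω e.1.1 e.1.2) ⁻¹'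
        {noiseMatrix (edgeProb p q cl) x e.1.1 e.1.2} := by
    ext ω
    simpa using hE.eq_noiseMatrix_iff x ω
  rw [hset, hE.2.2.1.measure_inter_preimage_eq_mul univ fun e _ => measurableSet_singleton _,
    productWeight, ENNReal.ofReal_prod_of_nonneg fun e _ => bernoulliWeight_nonneg _ _,
    ← Sym2.sortEquiv.symm.prod_comp]
  exact prod_congr rfl fun e _ => hE.measure_preimage_singleton e.2 _

lemma NoiseModel.measurableSet_eq_noiseMatrix (hE : NoiseModel p q cl E)
    (x : Sym2 (Fin n) → Bool) : MeasurableSet {ω | E ω = noiseMatrix (edgeProb p q cl) x} := by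
  simp only [hE.eq_noiseMatrix_iff, Set.ofPred_forall]
  exact .iInter fun e => hE.2.1 _ _ (measurableSet_singleton _)

theorem NoiseModel.ofReal_prob_le (hE : NoiseModel p q cl E)
    (P : Matrix (Fin n) (Fin n) ℝ → Prop) :
    ENNReal.ofReal (prob (edgeProb p q cl) {x | P (noiseMatrix (edgeProb p q cl) x)}) ≤
      ℙ {ω | P (E ω)} := by
  classical
  set N := noiseMatrix (edgeProb p q cl) with hN
  calc ENNReal.ofReal (prob (edgeProb p q cl) {x | P (N x)})
      = ∑ x with P (N x), ℙ {ω | E ω = N x} := by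
        simp only [hN, hE.measure_eq_noiseMatrix]
        rw [← ENNReal.ofReal_sum_of_nonneg fun x _ => productWeight_nonneg _ x, sum_filter]
        simp [prob, expect, Set.indicator_apply]
    _ = ℙ (⋃ x ∈ ({x | P (N x)} : Finset _), {ω | E ω = N x}) := by
        refine (measure_biUnion_finset (fun x _ y _ hxy => Set.disjoint_left.2 fun ω hx hy => ?_)
          fun x _ => hE.measurableSet_eq_noiseMatrix x).symm
        exact hxy (noiseMatrix_injective _ (Eq.trans (Eq.symm hx) hy))
    _ ≤ ℙ {ω | P (E ω)} := measure_mono fun ω hω => by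
        obtain ⟨x, hx, hωx⟩ := Set.mem_iUnion₂.1 hω
        simp only [Set.mem_ofPred_eq] at hωx ⊢
        rw [hωx]
        exact (mem_filter.1 hx).2

end NoiseModel

section SpectralDecomposition

open scoped RealInnerProductSpace
open WithLp

variable {n k : ℕ} {A M : Matrix (Fin n) (Fin n) ℝ} {lam : Fin n → ℝ} {v : Fin n → Fin n → ℝ}
  {b : OrthonormalBasis (Fin n) ℝ (EuclideanSpace ℝ (Fin n))}

lemma enorm_eq_norm_toLp {m : Type*} [Fintype m] (x : m → ℝ) : enorm x = ‖toLp 2 x‖ := by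
  simp [enorm, EuclideanSpace.norm_eq]

lemma IsSpectralDecomp.exists_orthonormalBasis (hA : IsSpectralDecomp A lam v) :
    ∃ b : OrthonormalBasis (Fin n) ℝ (EuclideanSpace ℝ (Fin n)), ∀ i, b i = toLp 2 (v i) := by
  have horth : Orthonormal ℝ ((Set.univ : Set (Fin n)).domRestrict fun i => toLp 2 (v i)) :=
    orthonormal_iff_ite.2 fun i j => by
      simp [EuclideanSpace.inner_toLp_toLp, dotProduct_comm, hA.2.1, Subtype.ext_iff]
  obtain ⟨b, hb⟩ := horth.exists_orthonormalBasis_extension_of_card_eq (by simp)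
  exact ⟨b, fun i => hb i trivial⟩

lemma toLp_vecMulVec_mulVec (hb : ∀ i, b i = toLp 2 (v i)) (i : Fin n) (x : Fin n → ℝ) :
    toLp 2 (vecMulVec (v i) (v i) *ᵥ x) = ⟪b i, toLp 2 x⟫ • b i := by
  simp [hb, vecMulVec_mulVec, EuclideanSpace.inner_toLp_toLp, dotProduct_comm]

lemma IsSpectralDecomp.isEigenbasis (hA : IsSpectralDecomp A lam v)
    (hb : ∀ i, b i = toLp 2 (v i)) : IsEigenbasis (toEuclideanCLM (𝕜 := ℝ) A) lam b := by
  intro i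
  rw [hb i, toEuclideanCLM_toLp, hA.2.2, sum_mulVec, toLp_sum]
  simp only [smul_mulVec, toLp_smul, toLp_vecMulVec_mulVec hb, ← hb, b.inner_eq_ite]
  simp

lemma enorm_projTop_mulVec (hb : ∀ i, b i = toLp 2 (v i)) (x : Fin n → ℝ) :
    enorm (projTop k v *ᵥ x) = ‖basisProj b {i | (i : ℕ) < k} (toLp 2 x)‖ := by
  simp only [enorm_eq_norm_toLp, projTop, sum_mulVec, toLp_sum, toLp_vecMulVec_mulVec hb,
    basisProj_apply]

lemma toLp_column (M : Matrix (Fin n) (Fin n) ℝ) (u : Fin n) :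
    toLp 2 (column M u) = toEuclideanCLM (𝕜 := ℝ) M (EuclideanSpace.single u 1) := by
  ext i
  simp [column]

lemma IsSpectralDecomp.enorm_projTop_column_le {R : ℝ}
    (hbound : TopProjBound (toEuclideanCLM (𝕜 := ℝ) A) (toEuclideanCLM (𝕜 := ℝ) M) k R)
    (hA : IsSpectralDecomp (A + M) lam v) (u : Fin n) :
    enorm (projTop k v *ᵥ column M u) ≤ R := by
  obtain ⟨b, hb⟩ := hA.exists_orthonormalBasis
  rw [enorm_projTop_mulVec hb, toLp_column]
  refine hbound lam b hA.1 ?_ u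
  rw [← map_add]
  exact hA.isEigenbasis hb

end SpectralDecomposition

section Parameters

variable {n k p δ ℓ κ : ℝ}

lemma mul_pow_three_le_mul (hp : 0 < p) (hδ : 0 ≤ δ) (hδp : δ ≤ p) (hn : 0 ≤ n)
    (hsize : 24000000 * k ^ 2 * p * ℓ ^ 3 ≤ n * δ ^ 2) :
    24000000 * k ^ 2 * ℓ ^ 3 ≤ n * p := by
  refine le_of_mul_le_mul_right ?_ hp
  calc 24000000 * k ^ 2 * ℓ ^ 3 * p ≤ n * δ ^ 2 := by linarith
    _ ≤ n * p ^ 2 := by gcongr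
    _ = n * p * p := by ring

lemma five_mul_sq_le (hk : 1 ≤ k) (hℓ : 1 ≤ ℓ) (h : 24000000 * k ^ 2 * ℓ ^ 3 ≤ n) :
    5 * ℓ ^ 2 ≤ n := by
  calc 5 * ℓ ^ 2 ≤ 24000000 * 1 ^ 2 * ℓ ^ 3 := by
        rw [one_pow, mul_one]
        gcongr
        · norm_num
        · norm_num
    _ ≤ n := le_trans (by gcongr) h

lemma mul_sqrt_le_of_size (hn : 0 < n) (hk : 1 ≤ k) (hℓ : 1 ≤ ℓ)
    (h : 24000000 * k ^ 2 * ℓ ^ 3 ≤ n) : ℓ * √(2 * k / n) ≤ 1 / 10 := by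
  refine le_of_sq_le_sq ?_ (by norm_num)
  rw [mul_pow, Real.sq_sqrt (by positivity), mul_div_assoc', div_le_iff₀ hn]
  calc ℓ ^ 2 * (2 * k) ≤ ℓ ^ 3 * (2 * k ^ 2) := by
        gcongr
        · norm_num
        · exact le_self_pow₀ hk two_ne_zero
    _ ≤ (1 / 10) ^ 2 * n := by
        have : 0 ≤ k ^ 2 * ℓ ^ 3 := by positivity
        linarith

lemma mul_sqrt_div_le (hn : 0 < n) (hk : 0 < k) (hp : 0 ≤ p) (hδ : 0 < δ) (hℓ : 0 ≤ ℓ)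
    (hsize : 24000000 * k ^ 2 * p * ℓ ^ 3 ≤ n * δ ^ 2) :
    ℓ * (√(600 * (n * p) * ℓ) / (δ * (n / (2 * k)))) ≤ 1 / 100 := by
  refine le_of_sq_le_sq ?_ (by norm_num)
  calc (ℓ * (√(600 * (n * p) * ℓ) / (δ * (n / (2 * k))))) ^ 2
      = 2400 * k ^ 2 * p * ℓ ^ 3 / (n * δ ^ 2) := by
        rw [mul_pow, div_pow, Real.sq_sqrt (by positivity)]
        field_simp
        ring
    _ ≤ (1 / 100) ^ 2 := by
        rw [div_le_iff₀ (by positivity)]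
        linarith

lemma mul_sqrt_mul_sqrt_le {ε : ℝ} (hn : 0 < n) (hk : 0 ≤ k) (hp : 0 ≤ p) (hℓ : 1 ≤ ℓ)
    (hε : 0 ≤ ε) (hεℓ : ℓ * ε ≤ 1 / 100) :
    ε * √(600 * (n * p) * ℓ) * √(2 * k / n) ≤ √(k * p) := by
  refine Real.le_sqrt_of_sq_le ?_
  calc (ε * √(600 * (n * p) * ℓ) * √(2 * k / n)) ^ 2
      = 1200 * (k * p) * (ε ^ 2 * ℓ) := by
        rw [mul_pow, mul_pow, Real.sq_sqrt (by positivity), Real.sq_sqrt (by positivity)]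
        field_simp
        ring
    _ ≤ 1200 * (k * p) * (ε ^ 2 * ℓ ^ 2) := by
        gcongr
        exact le_self_pow₀ hℓ two_ne_zero
    _ = 1200 * (k * p) * (ℓ * ε) ^ 2 := by ring
    _ ≤ 1200 * (k * p) * (1 / 100) ^ 2 := by gcongr
    _ ≤ k * p := by
        have := mul_nonneg hk hp
        linarith

lemma four_mul_le_min_mul (hκ : 0 < κ) (hℓ : 0 ≤ ℓ) :
    4 * ℓ ≤ min ℓ (1 / κ) * (4 * (κ * ℓ + 1)) := by
  rcases min_choice ℓ (1 / κ) with h | h <;> rw [h]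
  · have : 0 ≤ ℓ * (κ * ℓ) := by positivity
    linarith
  · have : 1 / κ * (4 * (κ * ℓ + 1)) = 4 * ℓ + 4 / κ := by
      field_simp
    have : 0 ≤ 4 / κ := by positivity
    linarith

lemma min_sq_mul_sq_le_one (hκ : 0 < κ) (hℓ : 0 ≤ ℓ) : min ℓ (1 / κ) ^ 2 * κ ^ 2 ≤ 1 := by
  calc min ℓ (1 / κ) ^ 2 * κ ^ 2 ≤ (1 / κ) ^ 2 * κ ^ 2 := by
        gcongr
        exact min_le_right _ _
    _ = 1 := by field_simp

lemma one_div_sq_add_mul_exp_le {a : ℝ} (hn : 0 < n) (ha : a ≤ -(3 * Real.log n)) :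
    1 / n ^ 2 + n * Real.exp a ≤ 2 / n ^ 2 := by
  have hexp : Real.exp a ≤ 1 / n ^ 3 := by
    calc Real.exp a ≤ Real.exp (-(3 * Real.log n)) := Real.exp_le_exp.2 ha
      _ = 1 / n ^ 3 := by
        rw [Real.exp_neg, ← Nat.cast_ofNat (n := 3), Real.exp_nat_mul, Real.exp_log hn, one_div]
  calc 1 / n ^ 2 + n * Real.exp a ≤ 1 / n ^ 2 + n * (1 / n ^ 3) := by gcongr
    _ = 2 / n ^ 2 := by field_simp; norm_num

end Parameters

section BlockModelNoise

variable {n k : ℕ}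

lemma TopProjBound.mono {G E : EuclideanSpace ℝ (Fin n) →L[ℝ] EuclideanSpace ℝ (Fin n)} {m : ℕ}
    {R R' : ℝ} (h : TopProjBound G E m R) (hR : R ≤ R') : TopProjBound G E m R' :=
  fun lam b hlam hb u => (h lam b hlam hb u).trans hR

lemma prob_not_topProjBound_le_two_div_sq {g : Sym2 (Fin n) → unitInterval} {p B L s κ : ℝ}
    {G : EuclideanSpace ℝ (Fin n) →L[ℝ] EuclideanSpace ℝ (Fin n)}
    {K : Submodule ℝ (EuclideanSpace ℝ (Fin n))} (hG : IsSignal G K L) (hg : ∀ e, (g e : ℝ) ≤ p)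
    (hlog : 8 ≤ Real.log n) (hp : 5 * Real.log n ^ 2 ≤ n * p)
    (hB : B = √(600 * (n * p) * Real.log n)) (hBL : 100 * B ≤ L)
    (hs : ∀ v, ‖K.starProjection (EuclideanSpace.single v 1)‖ ≤ s)
    (hls : Real.log n * (s + 2 * (B / L)) ≤ 1 / 2)
    (hκ : 0 < κ) (hκK : p * Module.finrank ℝ K = κ ^ 2) (hBs : B / L * B * s ≤ κ) :
    prob g {x | ¬ TopProjBound G (noiseOp g x) (Module.finrank ℝ K)
      (12 * (κ * Real.log n + 1))} ≤ 2 / (n : ℝ) ^ 2 := by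
  have hn : 0 < n := Nat.pos_of_ne_zero fun h => by norm_num [h] at hlog
  set ℓ := Real.log n
  have hsL : 0 ≤ s + 2 * (B / L) := by
    have hB0 : 0 ≤ B := hB ▸ Real.sqrt_nonneg _
    have hL0 : 0 ≤ L := by linarith
    have hs0 : 0 ≤ s := (norm_nonneg _).trans (hs ⟨0, hn⟩)
    positivity
  have hl : min ℓ (1 / κ) * (s + 2 * (B / L)) ≤ 1 / 2 :=
    (mul_le_mul_of_nonneg_right (min_le_left _ _) hsL).trans hls
  have hbound := prob_not_topProjBound_le hG hg (by linarith) hp hB hBL hs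
    (lt_min (by linarith) (by positivity)) hl (4 * (κ * ℓ + 1))
  have hR : 2 * (4 * (κ * ℓ + 1)) + 4 * (B / L) * B * s ≤ 12 * (κ * ℓ + 1) := by
    have : κ ≤ κ * ℓ := le_mul_of_one_le_right hκ.le (by linarith)
    linarith
  have hexp : 1 + 6 * min ℓ (1 / κ) ^ 2 * p * Module.finrank ℝ K
      - min ℓ (1 / κ) * (4 * (κ * ℓ + 1)) ≤ -(3 * ℓ) := by
    rw [mul_assoc _ p, hκK]
    linarith [four_mul_le_min_mul hκ (by linarith : 0 ≤ ℓ),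
      min_sq_mul_sq_le_one hκ (by linarith : 0 ≤ ℓ)]
  refine (prob_mono fun x (hx : ¬ TopProjBound _ _ _ _) => ?_).trans
    (hbound.trans (one_div_sq_add_mul_exp_le (by exact_mod_cast hn) hexp))
  exact fun h => hx (h.mono hR)

lemma surjective_of_forall_clusterSize_pos {cl : Fin n → Fin k} (h : ∀ i, 0 < clusterSize cl i) :
    Function.Surjective cl := fun i =>
  let ⟨v, hv⟩ := card_pos.1 (h i)
  ⟨v, (mem_filter.1 hv).2⟩

variable {p q : unitInterval} {cl : Fin n → Fin k}

theorem prob_not_topProjBound_meanMatrix_le (hpq : q < p)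
    (hcl : ∀ i, (n : ℝ) / (2 * k) ≤ clusterSize cl i) (hlog : 8 ≤ Real.log n)
    (hsize : 24000000 * (k : ℝ) ^ 2 * (p : ℝ) * Real.log n ^ 3 ≤ n * ((p : ℝ) - q) ^ 2) :
    prob (edgeProb p q cl) {x | ¬ TopProjBound
        (toEuclideanCLM (𝕜 := ℝ) (meanMatrix n k p q cl)) (noiseOp (edgeProb p q cl) x) k
        (12 * (√((k : ℝ) * p) * Real.log n + 1))} ≤ 2 / (n : ℝ) ^ 2 := by
  have hn : 0 < n := Nat.pos_of_ne_zero fun h => by norm_num [h] at hlog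
  have hk : 1 ≤ k := Nat.one_le_iff_ne_zero.2 fun h => (Fin.cast h (cl ⟨0, hn⟩)).elim0
  have hnR : (0 : ℝ) < n := by exact_mod_cast hn
  have hkR : (1 : ℝ) ≤ k := by exact_mod_cast hk
  have hδ : 0 < (p : ℝ) - q := sub_pos.2 (by exact_mod_cast hpq)
  have hp : (0 : ℝ) < p := by linarith [q.2.1]
  have hm : 0 < (n : ℝ) / (2 * k) := by positivity
  have hrank := finrank_blockSpace <| surjective_of_forall_clusterSize_pos fun i => by
    exact_mod_cast hm.trans_le (hcl i)
  have hℓε := mul_sqrt_div_le hnR (by linarith) hp.le hδ (by linarith) hsize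
  have hnp := mul_pow_three_le_mul hp hδ.le (by linarith [q.2.1]) hnR.le hsize
  have hnsize := hnp.trans (mul_le_of_le_one_right hnR.le p.2.2)
  have hs := norm_starProjection_blockSpace_le hm hcl
  rw [one_div_div] at hs
  have hℓs := mul_sqrt_le_of_size hnR hkR (by linarith) hnsize
  set B := √(600 * (n * (p : ℝ)) * Real.log n) with hB
  have hL : 0 < ((p : ℝ) - q) * (n / (2 * k)) := mul_pos hδ hm
  have hε0 : 0 ≤ B / (((p : ℝ) - q) * (n / (2 * k))) := by positivity
  have hBL : 100 * B ≤ ((p : ℝ) - q) * (n / (2 * k)) := by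
    have := (le_mul_of_one_le_left hε0 (by linarith)).trans hℓε
    rw [div_le_iff₀ hL] at this
    linarith
  have hbound := prob_not_topProjBound_le_two_div_sq (g := edgeProb p q cl)
    (isSignal_meanMatrix q.2.1 (by exact_mod_cast hpq.le) hcl) (edgeProb_le hpq.le)
    hlog (five_mul_sq_le hkR (by linarith) hnp) hB hBL hs (by linarith)
    (κ := √((k : ℝ) * p)) (by positivity)
    (by rw [hrank, Real.sq_sqrt (by positivity), mul_comm])
    (mul_sqrt_mul_sqrt_le hnR (by linarith) hp.le (by linarith) hε0 hℓε)
  rwa [hrank] at hbound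

end BlockModelNoise

section NoiseTerm

variable {n k : ℕ} {cl : Fin n → Fin k}

theorem NoiseModel.le_prob_enorm_projTop_column_le {p q : ℝ} {Ω : Type*} [MeasureSpace Ω]
    {E : Ω → Matrix (Fin n) (Fin n) ℝ} (hE : NoiseModel p q cl E)
    (hq : 0 ≤ q) (hpq : q < p) (hp : p ≤ 1)
    (hcl : ∀ i, (n : ℝ) / (2 * k) ≤ clusterSize cl i) (hlog : 8 ≤ Real.log n)
    (hsize : 24000000 * (k : ℝ) ^ 2 * p * Real.log n ^ 3 ≤ n * (p - q) ^ 2) :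
    ENNReal.ofReal (1 - 2 / (n : ℝ) ^ 2) ≤
      ℙ {ω | ∀ (lam : Fin n → ℝ) (v : Fin n → Fin n → ℝ),
        IsSpectralDecomp (meanMatrix n k p q cl + E ω) lam v →
        ∀ u, enorm (projTop k v *ᵥ column (E ω) u) ≤ 12 * (√((k : ℝ) * p) * Real.log n + 1)} := by
  lift p to unitInterval using ⟨by linarith, hp⟩
  lift q to unitInterval using ⟨hq, by linarith⟩
  let Good (M : Matrix (Fin n) (Fin n) ℝ) : Prop :=
    TopProjBound (toEuclideanCLM (𝕜 := ℝ) (meanMatrix n k p q cl)) (toEuclideanCLM (𝕜 := ℝ) M) k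
      (12 * (√((k : ℝ) * p) * Real.log n + 1))
  have hbad := prob_not_topProjBound_meanMatrix_le (by exact_mod_cast hpq) hcl hlog hsize
  have hcompl := prob_add_prob_compl (g := edgeProb p q cl)
    {x | Good (noiseMatrix (edgeProb p q cl) x)}
  refine (ENNReal.ofReal_le_ofReal ?_).trans ((hE.ofReal_prob_le Good).trans (measure_mono ?_))
  · have : prob (edgeProb p q cl) {x | Good (noiseMatrix (edgeProb p q cl) x)}ᶜ ≤ 2 / (n : ℝ) ^ 2 :=
      hbad
    linarith
  · exact fun ω hω lam v hA u => IsSpectralDecomp.enorm_projTop_column_le hω hA u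

lemma Balanced.div_two_mul_le_clusterSize (hbal : Balanced n k cl) (i : Fin k) :
    (n : ℝ) / (2 * k) ≤ clusterSize cl i := by
  have hfactor : 1 / (16 * Real.log n) ≤ 1 / 2 := by
    rcases le_or_gt n 1 with hn | hn
    · interval_cases n <;> norm_num
    · have : Real.log 2 ≤ Real.log n := Real.log_le_log two_pos (by exact_mod_cast hn)
      gcongr
      linarith [Real.log_two_gt_d9]
  calc (n : ℝ) / (2 * k) = (1 - 1 / 2) * (n / k) := by ring
    _ ≤ (1 - 1 / (16 * Real.log n)) * (n / k) := by gcongr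
    _ ≤ clusterSize cl i := (hbal i).1

lemma mul_add_one_le_mul_sq_add_sqrt {κ ℓ : ℝ} (hκ : 0 ≤ κ) (hℓ : 1 ≤ ℓ) :
    κ * ℓ + 1 ≤ κ * ℓ ^ 2 + √ℓ := by
  gcongr
  · exact le_self_pow₀ hℓ two_ne_zero
  · exact Real.one_le_sqrt.2 hℓ

lemma ofReal_one_sub_exp_div_eq_zero {a : ℝ} (hn : 0 < n) (ha : Real.log n ≤ a) :
    ENNReal.ofReal (1 - Real.exp a / n) = 0 := by
  have hnR : (0 : ℝ) < n := by exact_mod_cast hn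
  rw [ENNReal.ofReal_eq_zero, sub_nonpos, one_le_div hnR]
  exact (Real.log_le_iff_le_exp hnR).1 ha

theorem noise_term_bound_general :
    ∃ C > (0 : ℝ), ∃ c > (0 : ℝ), ∃ C₃ > (0 : ℝ),
      ∀ (n k : ℕ) (_ : 0 < n) (p q : ℝ) (_ : 0 ≤ q) (_ : q < p) (_ : p ≤ 1)
        (cl : Fin n → Fin k) (_ : ∀ i, (n : ℝ) / (2 * k) ≤ clusterSize cl i)
        (a : ℕ) (_ : 3 ≤ a)
        (_ : (n : ℝ) ≥ C * k ^ 2 * p * (Real.log n) ^ a / (p - q) ^ 2)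
        (Ω : Type*) (_ : MeasureSpace Ω)
        (E : Ω → Matrix (Fin n) (Fin n) ℝ) (_ : NoiseModel p q cl E),
        ENNReal.ofReal (1 - c / (n : ℝ)) ≤
          ℙ {ω : Ω | ∀ (lam : Fin n → ℝ) (v : Fin n → Fin n → ℝ),
            IsSpectralDecomp (meanMatrix n k p q cl + E ω) lam v →
            ∀ u : Fin n, enorm (projTop k v *ᵥ column (E ω) u) ≤
              C₃ * (√((k : ℝ) * p) * Real.log n ^ 2 + √(Real.log n))} := by
  refine ⟨24000000, by norm_num, Real.exp 8, Real.exp_pos 8, 12, by norm_num,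
    fun n k hn p q hq hpq hp cl hcl a ha hsize Ω _ E hE => ?_⟩
  rcases le_total (Real.log n) 8 with hlog | hlog
  · rw [ofReal_one_sub_exp_div_eq_zero hn hlog]
    exact zero_le
  have hnR : (1 : ℝ) ≤ n := by exact_mod_cast hn
  have hsize' : 24000000 * (k : ℝ) ^ 2 * p * Real.log n ^ 3 ≤ n * (p - q) ^ 2 := by
    rw [ge_iff_le, div_le_iff₀ (pow_pos (sub_pos.2 hpq) 2)] at hsize
    have : (0 : ℝ) ≤ p := by linarith
    exact le_trans (by gcongr; linarith) hsize
  have hfail : 2 / (n : ℝ) ^ 2 ≤ Real.exp 8 / n := by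
    gcongr
    · linarith [Real.add_one_le_exp (8 : ℝ)]
    · exact le_self_pow₀ hnR two_ne_zero
  refine (ENNReal.ofReal_le_ofReal (sub_le_sub_left hfail 1)).trans <|
    (hE.le_prob_enorm_projTop_column_le hq hpq hp hcl hlog hsize').trans <|
      measure_mono fun ω h lam v hA u => (h lam v hA u).trans ?_
  have hℓ : 1 ≤ Real.log n := by linarith
  exact mul_le_mul_of_nonneg_left (mul_add_one_le_mul_sq_add_sqrt (Real.sqrt_nonneg _) hℓ)
    (by norm_num)

end NoiseTerm

end SBM

open SBM in
/-- Upper bound of the noise term. There are constants `C, c, C₃ > 0`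
such that: if the partition is balanced, `k ≥ 2` and `n ≥ C·k²·p·(log n)¹²/(p−q)²`, then
with probability at least `1 − c/n` over `E`, for every vertex `u`,
`‖P_{Ĝ_k}·E_u‖ ≤ C₃(√(kp)(log n)² + √(log n))`. -/
theorem noise_term_bound :
    ∃ C > (0 : ℝ), ∃ c > (0 : ℝ), ∃ C₃ > (0 : ℝ),
      ∀ (n k : ℕ) (hn : 0 < n) (hk : 2 ≤ k)
        (p q : ℝ) (hq : 0 ≤ q) (hpq : q < p) (hp : p ≤ 1)
        (cl : Fin n → Fin k) (hbal : Balanced n k cl)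
        (hsize : (n : ℝ) ≥ C * k ^ 2 * p * (Real.log n) ^ 12 / (p - q) ^ 2)
        (Ω : Type) (_ : MeasureSpace Ω) (_ : IsProbabilityMeasure (ℙ : Measure Ω))
        (E : Ω → Matrix (Fin n) (Fin n) ℝ) (hE : NoiseModel p q cl E),
        ENNReal.ofReal (1 - c / (n : ℝ)) ≤
          ℙ {ω : Ω |
            ∀ (lam : Fin n → ℝ) (v : Fin n → Fin n → ℝ),
              IsSpectralDecomp (meanMatrix n k p q cl + E ω) lam v →
              ∀ u : Fin n,
                SBM.enorm ((projTop k v).mulVec (column (E ω) u)) ≤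
                  C₃ * (Real.sqrt ((k : ℝ) * p) * (Real.log n) ^ 2 +
                    Real.sqrt (Real.log n))} := by
  obtain ⟨C, hC, c, hc, C₃, hC₃, h⟩ := noise_term_bound_general
  exact ⟨C, hC, c, hc, C₃, hC₃, fun n k hn _ p q hq hpq hp cl hbal hsize Ω _ _ E hE =>
    h n k hn p q hq hpq hp cl hbal.div_two_mul_le_clusterSize 12 (by norm_num) hsize Ω _ E hE⟩
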